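/- Let p ∈ (1, ∞). Let Φ be a Φ-function such that Φ ∈ (Inc)_p ∩ (Dec), sup_{t>0} Φ(t)Φ(t^{-1}) < ∞, and Φ' is continuous on (0, ∞). Assume there is a Φ-function Ψ ∈ (aInc)_p ∩ (Dec) and a constant K ≥ 1 such that Φ(ts)/Φ(t) ≤ K·Ψ(s) for all t, s > 0. Then there exist positive constants C and c depending only on Φ, Ψ, p such that for every N-dimensional subspace X_N ⊂ C(Ω) (with no further assumptions), there is a set x = {x₁, …, x_m} ⊂ Ω of cardinality m ≤ c·Ψ(N^{1/min{p,2}})·(log 2N)³ such that ‖f‖_Φ ≤ C·(M_{Φ,Ψ}(m))^{1/p}·‖f‖_{Ψ,x} for all f ∈ X_N, where M_{Φ,Ψ}(m) := max{1, max{Ψ(t)/Φ(t) : t ∈ [Φ^{-1}(1), Φ^{-1}(m)]}} and ‖f‖_{Ψ,x} is the discrete Luxemburg functional with equal weights 1/m. -/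

import Mathlib

open MeasureTheory

noncomputable section

/-- The sup-norm (uniform norm) `‖f‖_∞ = sup_{x ∈ Ω} |f x|` of a real-valued function. -/
def supNorm {Ω : Type*} (f : Ω → ℝ) : ℝ := ⨆ x, |f x|

/-- The Luxemburg functional `‖f‖_Φ = inf {λ > 0 : ∫ Φ(|f|/λ) dμ ≤ 1}`. -/
def luxNorm {Ω : Type*} [MeasurableSpace Ω] (μ : Measure Ω) (Φ : ℝ → ℝ) (f : Ω → ℝ) : ℝ :=
  sInf {lam : ℝ | 0 < lam ∧ ∫ x, Φ (|f x| / lam) ∂μ ≤ 1}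

/-- The discrete Luxemburg functional `‖f‖_{Φ,x}` with respect to the uniform discrete
probability measure `(1/m) ∑_{j=1}^m δ_{x_j}`. -/
def discLuxNorm {Ω : Type*} (Φ : ℝ → ℝ) {m : ℕ} (x : Fin m → Ω) (f : Ω → ℝ) : ℝ :=
  sInf {lam : ℝ | 0 < lam ∧ (∑ j, Φ (|f (x j)| / lam)) / (m : ℝ) ≤ 1}

/-- The weighted discrete Luxemburg functional `‖f‖_{Φ,x,λ}` with respect to the discrete
probability measure `∑_{j=1}^m λ_j δ_{x_j}`. -/
def wDiscLuxNorm {Ω : Type*} (Φ : ℝ → ℝ) {m : ℕ} (x : Fin m → Ω) (w : Fin m → ℝ)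
    (f : Ω → ℝ) : ℝ :=
  sInf {lam : ℝ | 0 < lam ∧ (∑ j, w j * Φ (|f (x j)| / lam)) ≤ 1}

/-- `Φ : [0,∞) → [0,∞)` is a Φ-prefunction: increasing, `Φ(0) = 0`, `Φ(0+) = 0`,
`Φ(∞) = ∞` (stated for a function on `ℝ`, with the relevant conditions on `[0,∞)`). -/
structure IsPhiPrefun (Φ : ℝ → ℝ) : Prop where
  mono : MonotoneOn Φ (Set.Ici 0)
  map_zero : Φ 0 = 0
  nonneg : ∀ t : ℝ, 0 ≤ t → 0 ≤ Φ t
  tendsto_zero : Filter.Tendsto Φ (nhdsWithin 0 (Set.Ioi 0)) (nhds 0)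
  tendsto_atTop : Filter.Tendsto Φ Filter.atTop Filter.atTop

/-- `Φ ∈ (aInc)_p` with constant `a`: `t ↦ Φ(t) t^{-p}` is almost increasing on `(0,∞)`. -/
def AIncP (Φ : ℝ → ℝ) (p a : ℝ) : Prop :=
  ∀ s t : ℝ, 0 < s → s < t → Φ s / s ^ p ≤ a * (Φ t / t ^ p)

/-- `Φ ∈ (Inc)_p` : `t ↦ Φ(t) t^{-p}` is increasing on `(0,∞)`. -/
def IncP (Φ : ℝ → ℝ) (p : ℝ) : Prop :=
  ∀ s t : ℝ, 0 < s → s < t → Φ s / s ^ p ≤ Φ t / t ^ p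

/-- `Φ ∈ (Dec)_q` : `t ↦ Φ(t) t^{-q}` is decreasing on `(0,∞)`. -/
def DecQ (Φ : ℝ → ℝ) (q : ℝ) : Prop :=
  ∀ s t : ℝ, 0 < s → s < t → Φ t / t ^ q ≤ Φ s / s ^ q

/-- `Φ ∈ (aDec)_q` with constant `b`: `t ↦ Φ(t) t^{-q}` is almost decreasing on `(0,∞)`. -/
def ADecQ (Φ : ℝ → ℝ) (q b : ℝ) : Prop :=
  ∀ s t : ℝ, 0 < s → s < t → Φ t / t ^ q ≤ b * (Φ s / s ^ q)

/-- `t ↦ Φ(t) t^{-p}` is almost increasing with constant `a` on `(t_*, ∞)`. -/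
def AIncPOn (Φ : ℝ → ℝ) (p a tstar : ℝ) : Prop :=
  ∀ s t : ℝ, tstar < s → s < t → Φ s / s ^ p ≤ a * (Φ t / t ^ p)

/-- `t ↦ Φ(t) t^{-q}` is almost decreasing with constant `b` on `(t_*, ∞)`. -/
def ADecQOn (Φ : ℝ → ℝ) (q b tstar : ℝ) : Prop :=
  ∀ s t : ℝ, tstar < s → s < t → Φ t / t ^ q ≤ b * (Φ s / s ^ q)

/-- Entropy numbers `e_n(F, d)` of a set `F` with respect to a distance-like function `dd`:
the infimum of `ε > 0` such that `F` can be covered by `2^{2^n}` (one, for `n = 0`)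
`ε`-balls centered in `F`. -/
def entropyNumD {X : Type*} (dd : X → X → ℝ) (F : Set X) (n : ℕ) : ℝ :=
  sInf {ε : ℝ | 0 < ε ∧ ∃ T : Finset X, ↑T ⊆ F ∧
    T.card ≤ (if n = 0 then 1 else 2 ^ 2 ^ n) ∧ ∀ f ∈ F, ∃ g ∈ T, dd f g < ε}

/-- Sampling numbers `ϱ_m(F, ‖·‖)`: recovery by linear methods from samples at `m` points. -/
def sampNum {Ω : Type*} (nrm : (Ω → ℝ) → ℝ) (F : Set (Ω → ℝ)) (m : ℕ) : ℝ :=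
  sInf {r : ℝ | ∃ (x : Fin m → Ω) (T : (Fin m → ℝ) →ₗ[ℝ] (Ω → ℝ)),
    r = ⨆ f ∈ F, nrm (fun y => f y - T (fun j => f (x j)) y)}

/-- Modified sampling numbers `ϱ*_m(F, ‖·‖)`: recovery by arbitrary methods mapping into a
subspace of dimension at most `m`, from samples at `m` points. -/
def sampNumStar {Ω : Type*} (nrm : (Ω → ℝ) → ℝ) (F : Set (Ω → ℝ)) (m : ℕ) : ℝ :=
  sInf {r : ℝ | ∃ (x : Fin m → Ω) (Y : Submodule ℝ (Ω → ℝ)), Module.finrank ℝ Y ≤ m ∧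
    ∃ T : (Fin m → ℝ) → Ω → ℝ, (∀ v, T v ∈ Y) ∧
    r = ⨆ f ∈ F, nrm (fun y => f y - T (fun j => f (x j)) y)}

/-- Kolmogorov width `d_N(F, ‖·‖_∞)` : infimum over `N`-dimensional subspaces of `C(Ω)` of the
worst-case best approximation error in the uniform norm. -/
def kolWidth {Ω : Type*} [TopologicalSpace Ω] (F : Set (Ω → ℝ)) (N : ℕ) : ℝ :=
  sInf {r : ℝ | ∃ X : Submodule ℝ (Ω → ℝ), Module.finrank ℝ X = N ∧
    (∀ u ∈ X, Continuous u) ∧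
    r = ⨆ f ∈ F, sInf ((fun u => supNorm (fun y => f y - u y)) '' (X : Set (Ω → ℝ)))}

end
/-- `M_{Φ,Ψ}(m) = max{1, max{Ψ(t)/Φ(t) : t ∈ [Φ⁻¹(1), Φ⁻¹(m)]}}`, the interval
`[Φ⁻¹(1), Φ⁻¹(m)]` being expressed through the condition `Φ(t) ∈ [1, m]`. -/
noncomputable def MOf (Φ Ψ : ℝ → ℝ) (m : ℝ) : ℝ :=
  max 1 (sSup ((fun t => Ψ t / Φ t) '' {t : ℝ | 0 < t ∧ 1 ≤ Φ t ∧ Φ t ≤ m}))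

/-- The structural properties of a Φ-function used in the proof. -/
structure PhiOK (Φ : ℝ → ℝ) (r : ℝ) (q : ℕ) : Prop where
  zero : Φ 0 = 0
  pos : ∀ t, 0 < t → 0 < Φ t
  mono : ∀ s t, 0 ≤ s → s ≤ t → Φ s ≤ Φ t
  low : ∀ y t, 1 ≤ y → 0 ≤ t → y ^ r * Φ t ≤ Φ (y * t)
  up : ∀ y t, 1 ≤ y → 0 ≤ t → Φ (y * t) ≤ y ^ q * Φ t
  cont : Continuous fun t => Φ |t|

theorem PhiOK.nonneg {Φ : ℝ → ℝ} {r : ℝ} {q : ℕ} (h : PhiOK Φ r q) (t : ℝ) (ht : 0 ≤ t) :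
    0 ≤ Φ t := by
  have := h.mono 0 t le_rfl ht
  rwa [h.zero] at this

theorem PhiOK.low1 {Φ : ℝ → ℝ} {r : ℝ} {q : ℕ} (h : PhiOK Φ r q) (hr : 1 ≤ r) (y t : ℝ)
    (hy : 1 ≤ y) (ht : 0 ≤ t) : y * Φ t ≤ Φ (y * t) := by
  refine le_trans ?_ (h.low y t hy ht)
  refine mul_le_mul_of_nonneg_right ?_ (h.nonneg t ht)
  calc y = y ^ (1 : ℝ) := (Real.rpow_one y).symm
    _ ≤ y ^ r := Real.rpow_le_rpow_of_exponent_le hy hr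



theorem pow_le_chord (y : ℝ) (h1 : 1 ≤ y) (h2 : y ≤ 2) (q : ℕ) :
    y ^ q ≤ 1 + (2 ^ q - 1) * (y - 1) := by
  induction q with
  | zero => simp
  | succ k ih =>
    have h3 : (1 : ℝ) ≤ 2 ^ k := one_le_pow₀ (by norm_num)
    have : y ^ (k + 1) ≤ y * (1 + (2 ^ k - 1) * (y - 1)) := by
      rw [pow_succ, mul_comm]; exact mul_le_mul_of_nonneg_left ih (by linarith)
    refine this.trans ?_
    rw [pow_succ]
    nlinarith [mul_nonneg (mul_nonneg (sub_nonneg.2 h3) (sub_nonneg.2 h1)) (sub_nonneg.2 h2)]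

theorem det_le_const {d : ℕ} : ∃ C : ℝ, 0 ≤ C ∧
    ∀ A : EuclideanSpace ℝ (Fin d) →L[ℝ] EuclideanSpace ℝ (Fin d),
      |A.det| ≤ C * ‖A‖ ^ d := by
  have hcont : Continuous fun A : EuclideanSpace ℝ (Fin d) →L[ℝ] EuclideanSpace ℝ (Fin d) =>
      |A.det| := ContinuousLinearMap.continuous_det.abs
  have : ProperSpace (EuclideanSpace ℝ (Fin d) →L[ℝ] EuclideanSpace ℝ (Fin d)) :=
    FiniteDimensional.proper ℝ _
  obtain ⟨C, hC⟩ := (isCompact_closedBall (0 : EuclideanSpace ℝ (Fin d) →L[ℝ]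
    EuclideanSpace ℝ (Fin d)) 1).bddAbove_image hcont.continuousOn
  have hC' : ∀ A : EuclideanSpace ℝ (Fin d) →L[ℝ] EuclideanSpace ℝ (Fin d), ‖A‖ ≤ 1 →
      |A.det| ≤ C := fun A hA => hC ⟨A, by simpa using hA, rfl⟩
  have hC0 : 0 ≤ C := (abs_nonneg _).trans (hC' 0 (by simp))
  refine ⟨C, hC0, fun A => ?_⟩
  by_cases hA : A = 0
  · subst hA
    rcases Nat.eq_zero_or_pos d with rfl | hd
    · simpa using hC' 0 (by simp)
    · have : (0 : EuclideanSpace ℝ (Fin d) →L[ℝ] EuclideanSpace ℝ (Fin d)).det = 0 := by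
        simp [ContinuousLinearMap.det, hd.ne']
      rw [this]; simp; positivity
  · have hn : 0 < ‖A‖ := norm_pos_iff.2 hA
    have h1 := hC' (‖A‖⁻¹ • A) (by rw [norm_smul, norm_inv, norm_norm, inv_mul_cancel₀ hn.ne'])
    have h2 : (‖A‖⁻¹ • A).det = ‖A‖⁻¹ ^ d * A.det := by
      simp [ContinuousLinearMap.det]
    rw [h2, abs_mul, abs_of_pos (by positivity), inv_pow] at h1
    rwa [inv_mul_le_iff₀ (by positivity), mul_comm] at h1

theorem lewis_scalar {Φ : ℝ → ℝ} {r : ℝ} {q : ℕ} (hΦ : PhiOK Φ r q) {d : ℕ} {m : ℝ} (hm : 0 < m)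
    (z v : EuclideanSpace ℝ (Fin d)) (hv : ‖v‖ = 1) :
    m * Φ ‖z + (inner ℝ v z : ℝ) • v‖ - m * Φ ‖z‖ ≤
      2 ^ (q + 1) * (m * Φ ‖z‖ * (inner ℝ v z / ‖z‖) ^ 2) := by
  by_cases hz : z = 0
  · simp [hz, hΦ.zero]
  have hzn : 0 < ‖z‖ := norm_pos_iff.2 hz
  obtain ⟨g, hg⟩ : ∃ g : ℝ, g = inner ℝ v z / ‖z‖ := ⟨_, rfl⟩
  have hin : (inner ℝ v z : ℝ) = g * ‖z‖ := by rw [hg]; field_simp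
  have hg1 : g ^ 2 ≤ 1 := by
    have := abs_real_inner_le_norm v z
    rw [hv, one_mul] at this
    rw [sq_le_one_iff_abs_le_one, hg, abs_div, abs_norm]
    exact (div_le_one hzn).2 this
  obtain ⟨y, hy⟩ : ∃ y : ℝ, y = ‖z + (inner ℝ v z : ℝ) • v‖ / ‖z‖ := ⟨_, rfl⟩
  have hy2 : y ^ 2 = 1 + 3 * g ^ 2 := by
    rw [hy, div_pow, norm_add_sq_real, inner_smul_right, norm_smul, hv, mul_one,
      real_inner_comm v z, hin, Real.norm_eq_abs, sq_abs]
    field_simp; ring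
  have hy0 : 0 ≤ y := by rw [hy]; positivity
  have hy1 : 1 ≤ y := by nlinarith
  have hy3 : y ≤ 2 := by nlinarith
  have hyz : ‖z + (inner ℝ v z : ℝ) • v‖ = y * ‖z‖ := by rw [hy]; field_simp
  rw [hyz, ← hg]
  have k1 := hΦ.up y ‖z‖ hy1 hzn.le
  have k2 := pow_le_chord y hy1 hy3 q
  have k3 : y - 1 ≤ 2 * g ^ 2 := by nlinarith
  have k4 : (1 : ℝ) ≤ 2 ^ q := one_le_pow₀ (by norm_num)
  have k5 : y ^ q - 1 ≤ 2 ^ (q + 1) * g ^ 2 := by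
    have : ((2 : ℝ) ^ q - 1) * (y - 1) ≤ 2 ^ q * (2 * g ^ 2) :=
      mul_le_mul (by linarith) k3 (by linarith) (by positivity)
    rw [pow_succ]; linarith
  have k6 := (hΦ.pos _ hzn)
  have k7 : Φ (y * ‖z‖) - Φ ‖z‖ ≤ 2 ^ (q + 1) * g ^ 2 * Φ ‖z‖ := by
    have := mul_le_mul_of_nonneg_right k5 k6.le
    linarith
  calc m * Φ (y * ‖z‖) - m * Φ ‖z‖ = m * (Φ (y * ‖z‖) - Φ ‖z‖) := by ring
    _ ≤ m * (2 ^ (q + 1) * g ^ 2 * Φ ‖z‖) := mul_le_mul_of_nonneg_left k7 hm.le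
    _ = _ := by ring

/-- Lewis-type change of position (finite weighted point set). -/
theorem lewis {Φ : ℝ → ℝ} {r : ℝ} {q : ℕ} (hΦ : PhiOK Φ r q) (hr : 1 ≤ r)
    {ι : Type*} [Fintype ι] [Nonempty ι] (μ : ι → ℝ) (hμ : ∀ i, 0 < μ i) {d : ℕ} (hd : 1 ≤ d)
    (u₀ : ι → EuclideanSpace ℝ (Fin d))
    (hnd : ∀ v : EuclideanSpace ℝ (Fin d), (∀ i, inner ℝ v (u₀ i) = 0) → v = 0) :
    ∃ u : ι → EuclideanSpace ℝ (Fin d),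
      (∀ c : EuclideanSpace ℝ (Fin d), ∃ v, ∀ i, inner ℝ c (u₀ i) = inner ℝ v (u i)) ∧
      ∑ i, μ i * Φ ‖u i‖ ≤ 2 ∧
      ∀ v : EuclideanSpace ℝ (Fin d),
        ‖v‖ ^ 2 ≤ d * 2 ^ (q + 2) * ∑ i, μ i * Φ ‖u i‖ * (inner ℝ v (u i) / ‖u i‖) ^ 2 := by
  classical
  have : ProperSpace (EuclideanSpace ℝ (Fin d) →L[ℝ] EuclideanSpace ℝ (Fin d)) :=
    FiniteDimensional.proper ℝ _
  have hd' : (0 : ℝ) < d := by exact_mod_cast hd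
  let F : (EuclideanSpace ℝ (Fin d) →L[ℝ] EuclideanSpace ℝ (Fin d)) → ℝ :=
    fun A => ∑ i, μ i * Φ ‖A (u₀ i)‖
  let H : (EuclideanSpace ℝ (Fin d) →L[ℝ] EuclideanSpace ℝ (Fin d)) → ℝ :=
    fun A => |A.det| * Real.exp (-(d * F A))
  have hFc : Continuous F := by
    refine continuous_finsetSum _ fun i _ => continuous_const.mul ?_
    have : (fun A : EuclideanSpace ℝ (Fin d) →L[ℝ] EuclideanSpace ℝ (Fin d) => Φ ‖A (u₀ i)‖) =
        (fun t => Φ |t|) ∘ fun A => ‖A (u₀ i)‖ := by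
      ext A; simp
    rw [this]
    exact hΦ.cont.comp (by fun_prop)
  have hHc : Continuous H :=
    ContinuousLinearMap.continuous_det.abs.mul
      (Real.continuous_exp.comp (continuous_const.mul hFc).neg)
  -- coercivity
  obtain ⟨c₀, hc₀, hc₀μ⟩ : ∃ c : ℝ, 0 < c ∧ ∀ i, c ≤ μ i := by
    obtain ⟨i₀, hi₀⟩ := Finite.exists_min μ
    exact ⟨μ i₀, hμ i₀, hi₀⟩
  let Λ : (EuclideanSpace ℝ (Fin d) →L[ℝ] EuclideanSpace ℝ (Fin d)) →ₗ[ℝ]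
      (ι → EuclideanSpace ℝ (Fin d)) :=
    { toFun := fun A i => A (u₀ i), map_add' := fun A B => rfl, map_smul' := fun c A => rfl }
  have hspan : Submodule.span ℝ (Set.range u₀) = ⊤ := by
    rw [← Submodule.orthogonal_eq_bot_iff, Submodule.eq_bot_iff]
    intro v hv
    refine hnd v fun i => ?_
    rw [real_inner_comm]
    exact (Submodule.mem_orthogonal _ _).1 hv _ (Submodule.subset_span ⟨i, rfl⟩)
  have hΛ : LinearMap.ker Λ = ⊥ := by
    rw [LinearMap.ker_eq_bot']
    intro A hA
    have : (A : EuclideanSpace ℝ (Fin d) →ₗ[ℝ] EuclideanSpace ℝ (Fin d)) = 0 := by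
      refine LinearMap.ext_on_range hspan fun i => ?_
      exact congrFun hA i
    ext1 x
    exact LinearMap.congr_fun this x
  obtain ⟨K, hK0, hK⟩ := LinearMap.exists_antilipschitzWith Λ hΛ
  have hΦ1 : 0 < Φ 1 := hΦ.pos 1 one_pos
  have hlin : ∀ t : ℝ, 0 ≤ t → Φ 1 * (t - 1) ≤ Φ t := by
    intro t ht
    rcases le_total t 1 with h | h
    · have := hΦ.nonneg t ht; nlinarith
    · have := hΦ.low1 hr t 1 h zero_le_one
      rw [mul_one] at this; nlinarith
  have hcoer : ∀ A, c₀ * Φ 1 * (‖A‖ / K) - Φ 1 * ∑ i, μ i ≤ F A := by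
    intro A
    have h1 : ‖A‖ ≤ K * ‖Λ A‖ := by
      have := hK.le_mul_dist A 0
      simpa using this
    have h2 : ‖Λ A‖ ≤ ∑ i, ‖A (u₀ i)‖ := by
      refine (pi_norm_le_iff_of_nonneg (Finset.sum_nonneg fun i _ => norm_nonneg _)).2 fun i => ?_
      exact Finset.single_le_sum (f := fun i => ‖A (u₀ i)‖) (fun i _ => norm_nonneg _)
        (Finset.mem_univ i)
    have h3 : ‖A‖ / K ≤ ∑ i, ‖A (u₀ i)‖ := by
      rw [div_le_iff₀ (by exact_mod_cast hK0), mul_comm]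
      exact h1.trans (mul_le_mul_of_nonneg_left h2 K.2)
    have h4 : ∑ i, μ i * (Φ 1 * (‖A (u₀ i)‖ - 1)) ≤ F A :=
      Finset.sum_le_sum fun i _ => mul_le_mul_of_nonneg_left (hlin _ (norm_nonneg _)) (hμ i).le
    refine le_trans ?_ h4
    have h5 : ∑ i, μ i * (Φ 1 * (‖A (u₀ i)‖ - 1))
        = Φ 1 * ∑ i, μ i * ‖A (u₀ i)‖ - Φ 1 * ∑ i, μ i := by
      rw [Finset.mul_sum, Finset.mul_sum, ← Finset.sum_sub_distrib]
      exact Finset.sum_congr rfl fun i _ => by ring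
    rw [h5]
    have h6 : c₀ * ∑ i, ‖A (u₀ i)‖ ≤ ∑ i, μ i * ‖A (u₀ i)‖ := by
      rw [Finset.mul_sum]
      exact Finset.sum_le_sum fun i _ => mul_le_mul_of_nonneg_right (hc₀μ i) (norm_nonneg _)
    have h7 : c₀ * (‖A‖ / K) ≤ ∑ i, μ i * ‖A (u₀ i)‖ :=
      (mul_le_mul_of_nonneg_left h3 hc₀.le).trans h6
    nlinarith
  obtain ⟨C, hC0, hC⟩ := det_le_const (d := d)
  have hK0' : (0 : ℝ) < K := by exact_mod_cast hK0
  obtain ⟨b, hb⟩ : ∃ b : ℝ, b = d * (c₀ * Φ 1 / K) := ⟨_, rfl⟩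
  have hb0 : 0 < b := by rw [hb]; positivity
  have hHbd : ∀ A, H A ≤ (C / b ^ d * Real.exp (d * (Φ 1 * ∑ i, μ i))) *
      ((b * ‖A‖) ^ d * Real.exp (-(b * ‖A‖))) := by
    intro A
    have h1 : Real.exp (-(d * F A)) ≤
        Real.exp (d * (Φ 1 * ∑ i, μ i)) * Real.exp (-(b * ‖A‖)) := by
      rw [← Real.exp_add]
      apply Real.exp_le_exp.2
      have := mul_le_mul_of_nonneg_left (hcoer A) hd'.le
      have e : b * ‖A‖ = d * (c₀ * Φ 1 * (‖A‖ / K)) := by rw [hb]; ring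
      rw [e]; linarith
    have h2 := mul_le_mul (hC A) h1 (Real.exp_pos _).le (by positivity)
    refine h2.trans_eq ?_
    rw [mul_pow]
    field_simp
  have hlim : Filter.Tendsto (fun A => (C / b ^ d * Real.exp (d * (Φ 1 * ∑ i, μ i))) *
      ((b * ‖A‖) ^ d * Real.exp (-(b * ‖A‖))))
      (Filter.cocompact (EuclideanSpace ℝ (Fin d) →L[ℝ] EuclideanSpace ℝ (Fin d))) (nhds 0) := by
    have h1 : Filter.Tendsto (fun A : EuclideanSpace ℝ (Fin d) →L[ℝ] EuclideanSpace ℝ (Fin d) =>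
        b * ‖A‖) (Filter.cocompact _) Filter.atTop :=
      (tendsto_norm_cocompact_atTop).const_mul_atTop hb0
    have h2 := (Real.tendsto_pow_mul_exp_neg_atTop_nhds_zero d).comp h1
    simpa using h2.const_mul (C / b ^ d * Real.exp (d * (Φ 1 * ∑ i, μ i)))
  let I : EuclideanSpace ℝ (Fin d) →L[ℝ] EuclideanSpace ℝ (Fin d) := ContinuousLinearMap.id ℝ _
  have hI : 0 < H I := by
    have : I.det = 1 := by simp [I, ContinuousLinearMap.det]
    simp only [H, this, abs_one, one_mul]
    exact Real.exp_pos _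
  obtain ⟨A, hA⟩ := hHc.exists_forall_ge' I (by
    filter_upwards [hlim.eventually (gt_mem_nhds hI)] with A hA
    exact (hHbd A).trans hA.le)
  have hAdet : A.det ≠ 0 := by
    intro h0
    have := hA I
    simp only [H, h0, abs_zero, zero_mul] at this
    simp only [H] at hI
    linarith
  have hmax : ∀ B : EuclideanSpace ℝ (Fin d) →L[ℝ] EuclideanSpace ℝ (Fin d),
      |B.det| * Real.exp (-(d * F (B.comp A))) ≤ Real.exp (-(d * F A)) := by
    intro B
    have h1 := hA (B.comp A)
    have h2 : (B.comp A).det = B.det * A.det := by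
      simp [ContinuousLinearMap.det]
    simp only [H, h2, abs_mul] at h1
    have h3 : 0 < |A.det| := abs_pos.2 hAdet
    rw [mul_assoc, mul_left_comm] at h1
    exact le_of_mul_le_mul_left h1 h3
  refine ⟨fun i => A (u₀ i), ?_, ?_, ?_⟩
  · intro c
    let e := LinearEquiv.ofIsUnitDet (v := (EuclideanSpace.basisFun (Fin d) ℝ).toBasis)
      (v' := (EuclideanSpace.basisFun (Fin d) ℝ).toBasis)
      (f := (A : EuclideanSpace ℝ (Fin d) →ₗ[ℝ] EuclideanSpace ℝ (Fin d)))
      (by rw [LinearMap.det_toMatrix]; exact isUnit_iff_ne_zero.2 hAdet)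
    refine ⟨LinearMap.adjoint (e.symm : EuclideanSpace ℝ (Fin d) →ₗ[ℝ] EuclideanSpace ℝ (Fin d)) c,
      fun i => ?_⟩
    rw [LinearMap.adjoint_inner_left]
    change inner ℝ c (u₀ i) = inner ℝ c (e.symm (e (u₀ i)))
    rw [LinearEquiv.symm_apply_apply]
  · have h1 := hmax ((1/2 : ℝ) • I)
    have h2 : ((1/2 : ℝ) • I).det = (1/2) ^ d := by
      simp [I, ContinuousLinearMap.det]
    rw [h2, abs_of_pos (by positivity)] at h1
    have h3 : F (((1/2 : ℝ) • I).comp A) ≤ (1/2) * F A := by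
      simp only [F]
      rw [Finset.mul_sum]
      refine Finset.sum_le_sum fun i _ => ?_
      have e : ‖(((1/2 : ℝ) • I).comp A) (u₀ i)‖ = (1/2) * ‖A (u₀ i)‖ := by
        simp [I, norm_smul]
      rw [e]
      have := hΦ.low1 hr 2 ((1/2) * ‖A (u₀ i)‖) (by norm_num) (by positivity)
      have e2 : 2 * ((1/2) * ‖A (u₀ i)‖) = ‖A (u₀ i)‖ := by ring
      rw [e2] at this
      have := hμ i
      nlinarith
    have h4 := Real.log_le_log (by positivity) h1
    rw [Real.log_exp, Real.log_mul (by positivity) (Real.exp_pos _).ne', Real.log_exp,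
      Real.log_pow, one_div, Real.log_inv] at h4
    have h5 : F A ≤ F (((1/2 : ℝ) • I).comp A) + Real.log 2 := by
      rw [one_div]
      by_contra hc; push Not at hc; nlinarith
    have h6 := Real.log_two_lt_d9
    have : F A ≤ 2 := by linarith
    exact this
  · intro v
    -- unit vectors first
    have hunit : ∀ v : EuclideanSpace ℝ (Fin d), ‖v‖ = 1 → 1 ≤ d * 2 ^ (q + 2) *
        ∑ i, μ i * Φ ‖A (u₀ i)‖ * (inner ℝ v (A (u₀ i)) / ‖A (u₀ i)‖) ^ 2 := by
      intro v hv
      let B : EuclideanSpace ℝ (Fin d) →L[ℝ] EuclideanSpace ℝ (Fin d) :=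
        LinearMap.toContinuousLinearMap
          (LinearMap.transvection (innerSL ℝ v : EuclideanSpace ℝ (Fin d) →ₗ[ℝ] ℝ) v)
      have hB : ∀ x, B x = x + (inner ℝ v x : ℝ) • v := fun x => by
        simp [B, LinearMap.transvection]
      have hBdet : B.det = 2 := by
        have : B.det = 1 + (innerSL ℝ v : EuclideanSpace ℝ (Fin d) →ₗ[ℝ] ℝ) v := by
          have := LinearMap.transvection.det
            (innerSL ℝ v : EuclideanSpace ℝ (Fin d) →ₗ[ℝ] ℝ) v
          simpa [ContinuousLinearMap.det, B] using this
        rw [this]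
        simp [hv]; norm_num
      have h1 := hmax B
      rw [hBdet, abs_of_pos (by norm_num)] at h1
      have h4 := Real.log_le_log (by positivity) h1
      rw [Real.log_exp, Real.log_mul (by positivity) (Real.exp_pos _).ne', Real.log_exp] at h4
      have h3 : F (B.comp A) - F A ≤ 2 ^ (q + 1) *
          ∑ i, μ i * Φ ‖A (u₀ i)‖ * (inner ℝ v (A (u₀ i)) / ‖A (u₀ i)‖) ^ 2 := by
        simp only [F]
        rw [← Finset.sum_sub_distrib, Finset.mul_sum]
        refine Finset.sum_le_sum fun i _ => ?_
        rw [ContinuousLinearMap.comp_apply, hB]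
        set z := A (u₀ i)
        exact lewis_scalar hΦ (hμ i) z v hv
      have h6 := Real.log_two_gt_d9
      have h7 := mul_le_mul_of_nonneg_left h3 hd'.le
      rw [mul_sub] at h7
      obtain ⟨S, hS⟩ : ∃ S : ℝ, S = ∑ i, μ i * Φ ‖A (u₀ i)‖ *
        (inner ℝ v (A (u₀ i)) / ‖A (u₀ i)‖) ^ 2 := ⟨_, rfl⟩
      rw [← hS] at h7 ⊢
      have e1 : (d : ℝ) * 2 ^ (q + 2) * S = 2 * (d * (2 ^ (q + 1) * S)) := by ring
      rw [e1]
      linarith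
    by_cases hv : v = 0
    · subst hv; simp
    · have hn : 0 < ‖v‖ := norm_pos_iff.2 hv
      have h1 := hunit (‖v‖⁻¹ • v) (by rw [norm_smul, norm_inv, norm_norm, inv_mul_cancel₀ hn.ne'])
      have h2 : ∑ i, μ i * Φ ‖A (u₀ i)‖ * (inner ℝ (‖v‖⁻¹ • v) (A (u₀ i)) / ‖A (u₀ i)‖) ^ 2
          = (‖v‖ ^ 2)⁻¹ * ∑ i, μ i * Φ ‖A (u₀ i)‖ * (inner ℝ v (A (u₀ i)) / ‖A (u₀ i)‖) ^ 2 := by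
        rw [Finset.mul_sum]
        refine Finset.sum_congr rfl fun i _ => ?_
        rw [real_inner_smul_left]; ring
      rw [h2] at h1
      have h3 := mul_le_mul_of_nonneg_left h1 (sq_nonneg ‖v‖)
      rw [mul_one] at h3
      refine h3.trans_eq ?_
      field_simp



/-- The unnormalised Gaussian weight. -/
noncomputable def gw {d : ℕ} (v : EuclideanSpace ℝ (Fin d)) : ℝ := Real.exp (-(1/2) * ‖v‖ ^ 2)

theorem gw_integrable {d : ℕ} : Integrable (gw (d := d)) := by
  have h := GaussianFourier.integrable_cexp_neg_mul_sq_norm_add (V := EuclideanSpace ℝ (Fin d))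
    (b := (1/2 : ℂ)) (by norm_num) 0 0
  have := h.norm
  refine this.congr (Filter.Eventually.of_forall fun v => ?_)
  simp only [gw, Complex.norm_exp]
  congr 1
  simp
  norm_cast

theorem gw_pos {d : ℕ} (v : EuclideanSpace ℝ (Fin d)) : 0 < gw v := Real.exp_pos _

theorem gw_integral_pos {d : ℕ} : 0 < ∫ v : EuclideanSpace ℝ (Fin d), gw v :=
  integral_exp_pos gw_integrable

theorem gw_tail {d : ℕ} (a : EuclideanSpace ℝ (Fin d)) (ha : ‖a‖ ≤ 1) (t : ℝ) (ht : 0 ≤ t) :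
    ∫ v in {v : EuclideanSpace ℝ (Fin d) | t < inner ℝ v a}, gw v
      ≤ Real.exp (-(t ^ 2 / 2)) * ∫ v : EuclideanSpace ℝ (Fin d), gw v := by
  have hsh : Integrable (fun v : EuclideanSpace ℝ (Fin d) => gw (v - t • a)) :=
    gw_integrable.comp_sub_right _
  have h1 : ∀ v : EuclideanSpace ℝ (Fin d), t < inner ℝ v a →
      gw v ≤ Real.exp (-(t ^ 2 / 2)) * gw (v - t • a) := by
    intro v hv
    simp only [gw]
    rw [← Real.exp_add]
    apply Real.exp_le_exp.2
    rw [@norm_sub_sq_real, norm_smul, inner_smul_right, Real.norm_eq_abs, mul_pow, sq_abs]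
    have : ‖a‖ ^ 2 ≤ 1 := by nlinarith [norm_nonneg a]
    nlinarith [mul_nonneg ht (sub_nonneg.2 hv.le), mul_nonneg (sq_nonneg t) (sub_nonneg.2 this)]
  have hms : MeasurableSet {v : EuclideanSpace ℝ (Fin d) | t < inner ℝ v a} :=
    (isOpen_lt continuous_const (by fun_prop)).measurableSet
  calc _ ≤ ∫ v in {v : EuclideanSpace ℝ (Fin d) | t < inner ℝ v a},
          Real.exp (-(t ^ 2 / 2)) * gw (v - t • a) :=
        setIntegral_mono_on gw_integrable.integrableOn (hsh.const_mul _).integrableOn hms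
          fun v hv => h1 v hv
    _ ≤ ∫ v, Real.exp (-(t ^ 2 / 2)) * gw (v - t • a) :=
        setIntegral_le_integral (hsh.const_mul _)
          (Filter.Eventually.of_forall fun v => (mul_pos (Real.exp_pos _) (gw_pos _)).le)
    _ = _ := by
        rw [integral_const_mul, integral_sub_right_eq_self (fun v => gw v)]

theorem gw_slab {d : ℕ} {J : Type*} [Fintype J] (a : J → EuclideanSpace ℝ (Fin d))
    (ha : ∀ j, ‖a j‖ ≤ 1) (t : ℝ) (ht : 0 ≤ t)
    (hn : 2 * (Fintype.card J : ℝ) * Real.exp (-(t ^ 2 / 2)) ≤ 1 / 2) :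
    (1/2) * ∫ v : EuclideanSpace ℝ (Fin d), gw v
      ≤ ∫ v in {v : EuclideanSpace ℝ (Fin d) | ∀ j, |inner ℝ v (a j)| ≤ t}, gw v := by
  set K := {v : EuclideanSpace ℝ (Fin d) | ∀ j, |inner ℝ v (a j)| ≤ t} with hK
  have hKm : MeasurableSet K := by
    have : IsClosed K := by
      rw [hK, Set.ofPred_forall]
      exact isClosed_iInter fun j => isClosed_le (by fun_prop) continuous_const
    exact this.measurableSet
  set I := ∫ v : EuclideanSpace ℝ (Fin d), gw v
  have hI : 0 < I := gw_integral_pos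
  let A : J → Set (EuclideanSpace ℝ (Fin d)) := fun j => {v | t < inner ℝ v (a j)}
  let B : J → Set (EuclideanSpace ℝ (Fin d)) := fun j => {v | t < inner ℝ v (-(a j))}
  have hAm : ∀ j, MeasurableSet (A j) := fun j =>
    (isOpen_lt continuous_const (by fun_prop)).measurableSet
  have hBm : ∀ j, MeasurableSet (B j) := fun j =>
    (isOpen_lt continuous_const (by fun_prop)).measurableSet
  have hpt : ∀ v : EuclideanSpace ℝ (Fin d), gw v ≤ K.indicator gw v +
      ∑ j, ((A j).indicator gw v + (B j).indicator gw v) := by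
    intro v
    have hnn : ∀ S : Set (EuclideanSpace ℝ (Fin d)), 0 ≤ S.indicator gw v :=
      fun S => Set.indicator_nonneg (fun v _ => (gw_pos v).le) v
    by_cases hv : v ∈ K
    · rw [Set.indicator_of_mem hv]
      have : 0 ≤ ∑ j, ((A j).indicator gw v + (B j).indicator gw v) :=
        Finset.sum_nonneg fun j _ => add_nonneg (hnn _) (hnn _)
      linarith
    · have hv' : ∃ j, t < |inner ℝ v (a j)| := by
        by_contra hc; push Not at hc; exact hv hc
      obtain ⟨j, hj⟩ := hv'
      have h1 : gw v ≤ (A j).indicator gw v + (B j).indicator gw v := by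
        rcases lt_abs.1 hj with h | h
        · have : v ∈ A j := h
          rw [Set.indicator_of_mem this]; linarith [hnn (B j)]
        · have : v ∈ B j := by simpa [B] using h
          rw [Set.indicator_of_mem this]; linarith [hnn (A j)]
      have h2 := Finset.single_le_sum (f := fun j => (A j).indicator gw v + (B j).indicator gw v)
        (fun j _ => add_nonneg (hnn _) (hnn _)) (Finset.mem_univ j)
      linarith [hnn K]
  have hIntg : ∀ j, Integrable (fun v => (A j).indicator gw v + (B j).indicator gw v) := fun j =>
    (gw_integrable.indicator (hAm j)).add (gw_integrable.indicator (hBm j))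
  have h3 : I ≤ (∫ v in K, gw v) + ∑ j, ((∫ v in A j, gw v) + ∫ v in B j, gw v) := by
    have := integral_mono gw_integrable
      ((gw_integrable.indicator hKm).add (integrable_finsetSum Finset.univ fun j _ => hIntg j)) hpt
    refine this.trans_eq ?_
    have e1 := integral_add (gw_integrable.indicator hKm)
      (integrable_finsetSum Finset.univ fun j _ => hIntg j)
    refine e1.trans ?_
    rw [integral_indicator hKm, integral_finsetSum _ fun j _ => hIntg j]
    congr 1
    refine Finset.sum_congr rfl fun j _ => ?_
    rw [integral_add (gw_integrable.indicator (hAm j)) (gw_integrable.indicator (hBm j)),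
      integral_indicator (hAm j), integral_indicator (hBm j)]
  have h4 : ∑ j, ((∫ v in A j, gw v) + ∫ v in B j, gw v)
      ≤ ∑ j : J, 2 * (Real.exp (-(t ^ 2 / 2)) * I) := by
    refine Finset.sum_le_sum fun j _ => ?_
    have e1 := gw_tail (a j) (ha j) t ht
    have e2 := gw_tail (-(a j)) (by rw [norm_neg]; exact ha j) t ht
    simp only [A, B]
    linarith
  rw [Finset.sum_const, Finset.card_univ, nsmul_eq_mul] at h4
  nlinarith

theorem gw_shift {d : ℕ} (K : Set (EuclideanSpace ℝ (Fin d))) (hKm : MeasurableSet K)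
    (hsym : ∀ v, v ∈ K ↔ -v ∈ K) (y : EuclideanSpace ℝ (Fin d)) :
    gw y * ∫ v in K, gw v ≤ ∫ v in {v | v - y ∈ K}, gw v := by
  have e1 : ∫ v in {v | v - y ∈ K}, gw v = ∫ v, K.indicator (fun v => gw (v + y)) v := by
    rw [← integral_indicator (show MeasurableSet {v | v - y ∈ K} from
      (measurable_id.sub_const y) hKm)]
    rw [← integral_add_right_eq_self _ y]
    congr 1
    ext v
    by_cases hv : v ∈ K
    · rw [Set.indicator_of_mem hv, Set.indicator_of_mem]; simpa using hv
    · rw [Set.indicator_of_notMem hv, Set.indicator_of_notMem]; simpa using hv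
  have e2 : ∫ v, K.indicator (fun v => gw (v + y)) v = ∫ v, K.indicator (fun v => gw (v - y)) v := by
    rw [← integral_neg_eq_self]
    congr 1
    ext v
    by_cases hv : v ∈ K
    · rw [Set.indicator_of_mem hv, Set.indicator_of_mem ((hsym v).1 hv)]
      simp only [gw]
      congr 3
      rw [← norm_neg]; congr 1; abel
    · rw [Set.indicator_of_notMem hv, Set.indicator_of_notMem (fun h => hv ((hsym v).2 h))]
  have i1 : Integrable (K.indicator (fun v => gw (v + y))) :=
    (gw_integrable.comp_add_right y).indicator hKm
  have i2 : Integrable (K.indicator (fun v => gw (v - y))) :=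
    (gw_integrable.comp_sub_right y).indicator hKm
  have e3 : 2 * (gw y * ∫ v in K, gw v) ≤
      (∫ v, K.indicator (fun v => gw (v + y)) v) + ∫ v, K.indicator (fun v => gw (v - y)) v := by
    rw [← integral_add i1 i2, ← integral_indicator hKm, ← mul_assoc, ← integral_const_mul]
    refine integral_mono ((gw_integrable.indicator hKm).const_mul _) (i1.add i2) fun v => ?_
    by_cases hv : v ∈ K
    · simp only [Set.indicator_of_mem hv, gw]
      rw [mul_assoc, ← Real.exp_add, norm_add_sq_real, norm_sub_sq_real]
      set b := inner ℝ v y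
      have a1 : Real.exp (-(1/2) * (‖v‖ ^ 2 + 2 * b + ‖y‖ ^ 2)) =
        Real.exp (-(1 / 2) * ‖y‖ ^ 2 + -(1 / 2) * ‖v‖ ^ 2) * Real.exp (-b) := by
        rw [← Real.exp_add]; congr 1; ring
      have a2 : Real.exp (-(1/2) * (‖v‖ ^ 2 - 2 * b + ‖y‖ ^ 2)) =
        Real.exp (-(1 / 2) * ‖y‖ ^ 2 + -(1 / 2) * ‖v‖ ^ 2) * Real.exp b := by
        rw [← Real.exp_add]; congr 1; ring
      rw [a1, a2]
      have b1 := Real.add_one_le_exp b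
      have b2 := Real.add_one_le_exp (-b)
      have b3 := Real.exp_pos (-(1 / 2) * ‖y‖ ^ 2 + -(1 / 2) * ‖v‖ ^ 2)
      nlinarith
    · simp [Set.indicator_of_notMem hv]
  rw [e1]
  linarith

/-- Packing bound (dual Sudakov). -/
theorem packing_bound {d : ℕ} {J : Type*} [Fintype J] (a : J → EuclideanSpace ℝ (Fin d))
    (ha : ∀ j, ‖a j‖ ≤ 1) (n : ℝ) (hn1 : 1 ≤ n) (hn : (Fintype.card J : ℝ) ≤ n)
    (c : EuclideanSpace ℝ (Fin d)) (ρ ε : ℝ) (hε : 0 < ε)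
    (T : Finset (EuclideanSpace ℝ (Fin d)))
    (hT : ∀ v ∈ T, ‖v - c‖ ≤ ρ)
    (hsep : ∀ v ∈ T, ∀ w ∈ T, v ≠ w → ∃ j, ε < |inner ℝ (v - w) (a j)|) :
    (T.card : ℝ) ≤ 2 * Real.exp (4 * Real.log (4 * n) * ρ ^ 2 / ε ^ 2) := by
  set t := Real.sqrt (2 * Real.log (4 * n)) with ht
  have hlog : 0 < Real.log (4 * n) := Real.log_pos (by linarith)
  have ht2 : t ^ 2 = 2 * Real.log (4 * n) := Real.sq_sqrt (by linarith)
  have ht0 : 0 < t := Real.sqrt_pos.2 (by linarith)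
  set K := {v : EuclideanSpace ℝ (Fin d) | ∀ j, |inner ℝ v (a j)| ≤ t} with hK
  have hKm : MeasurableSet K := by
    have : IsClosed K := by
      rw [hK, Set.ofPred_forall]
      exact isClosed_iInter fun j => isClosed_le (by fun_prop) continuous_const
    exact this.measurableSet
  set I := ∫ v : EuclideanSpace ℝ (Fin d), gw v
  have hI : 0 < I := gw_integral_pos
  have hslab : (1/2) * I ≤ ∫ v in K, gw v := by
    apply gw_slab a ha t ht0.le
    rw [ht2, mul_div_cancel_left₀ _ (two_ne_zero), Real.exp_neg, Real.exp_log (by linarith)]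
    rw [mul_inv_le_iff₀ (by linarith)]
    linarith
  let y : EuclideanSpace ℝ (Fin d) → EuclideanSpace ℝ (Fin d) := fun v => (2 * t / ε) • (v - c)
  have hdisj : Set.Pairwise (T : Set (EuclideanSpace ℝ (Fin d)))
      (Function.onFun Disjoint (fun v => {z | z - y v ∈ K})) := by
    intro v hv w hw hvw
    rw [Function.onFun, Set.disjoint_left]
    intro z hz1 hz2
    obtain ⟨j, hj⟩ := hsep v hv w hw hvw
    have z1 := abs_le.1 (hz1 j)
    have z2 := abs_le.1 (hz2 j)
    have e : inner ℝ (z - y w) (a j) - inner ℝ (z - y v) (a j)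
        = (2 * t / ε) * inner ℝ (v - w) (a j) := by
      rw [← inner_sub_left, ← real_inner_smul_left]
      congr 1
      simp only [y]
      module
    have h1 : |(2 * t / ε) * inner ℝ (v - w) (a j)| ≤ 2 * t := by
      rw [← e, abs_le]; constructor <;> linarith
    rw [abs_mul, abs_of_pos (by positivity)] at h1
    have h2 : (2 * t / ε) * ε < (2 * t / ε) * |inner ℝ (v - w) (a j)| :=
      mul_lt_mul_of_pos_left hj (by positivity)
    rw [div_mul_cancel₀ _ hε.ne'] at h2
    linarith
  have hsum : ∑ v ∈ T, ∫ z in {z | z - y v ∈ K}, gw z ≤ I := by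
    rw [← integral_biUnion_finset (s := fun v => {z | z - y v ∈ K}) T (fun v _ => (measurable_id.sub_const (y v)) hKm) hdisj
      (fun v _ => gw_integrable.integrableOn)]
    exact setIntegral_le_integral gw_integrable (Filter.Eventually.of_forall fun v => (gw_pos v).le)
  have hlow : ∀ v ∈ T, Real.exp (-(4 * Real.log (4 * n) * ρ ^ 2 / ε ^ 2)) * ((1/2) * I)
      ≤ ∫ z in {z | z - y v ∈ K}, gw z := by
    intro v hv
    refine le_trans ?_ (gw_shift K hKm (fun v => by simp [hK]) (y v))
    refine mul_le_mul ?_ hslab (by positivity) (gw_pos _).le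
    apply Real.exp_le_exp.2
    simp only [y]
    rw [norm_smul, mul_pow, Real.norm_eq_abs, sq_abs, div_pow, mul_pow, ht2]
    have h1 : ‖v - c‖ ^ 2 ≤ ρ ^ 2 := pow_le_pow_left₀ (norm_nonneg _) (hT v hv) 2
    have h2 : 4 * Real.log (4 * n) / ε ^ 2 * ‖v - c‖ ^ 2 ≤ 4 * Real.log (4 * n) / ε ^ 2 * ρ ^ 2 :=
      mul_le_mul_of_nonneg_left h1 (by positivity)
    have e1 : -(1/2) * ((2 : ℝ) ^ 2 * (2 * Real.log (4 * n)) / ε ^ 2 * ‖v - c‖ ^ 2)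
      = -(4 * Real.log (4 * n) / ε ^ 2 * ‖v - c‖ ^ 2) := by ring
    rw [e1]
    have e2 : 4 * Real.log (4 * n) * ρ ^ 2 / ε ^ 2 = 4 * Real.log (4 * n) / ε ^ 2 * ρ ^ 2 := by ring
    rw [e2]; linarith
  have h5 := (Finset.sum_le_sum hlow).trans hsum
  rw [Finset.sum_const, nsmul_eq_mul, Real.exp_neg] at h5
  set X := Real.exp (4 * Real.log (4 * n) * ρ ^ 2 / ε ^ 2)
  have hX : 0 < X := Real.exp_pos _
  have h6 : (T.card : ℝ) * (X⁻¹ * (1/2)) ≤ 1 := by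
    by_contra hc; push Not at hc; nlinarith
  have : (T.card : ℝ) = (T.card : ℝ) * (X⁻¹ * (1/2)) * (2 * X) := by field_simp
  rw [this]; nlinarith

/-- Covering form of the dual Sudakov inequality. -/
theorem net_exists {d : ℕ} {J : Type*} [Fintype J] (a : J → EuclideanSpace ℝ (Fin d))
    (ha : ∀ j, ‖a j‖ ≤ 1) (n : ℝ) (hn1 : 1 ≤ n) (hn : (Fintype.card J : ℝ) ≤ n)
    (c : EuclideanSpace ℝ (Fin d)) (ρ ε : ℝ) (hε : 0 < ε)
    (S : Set (EuclideanSpace ℝ (Fin d))) (hS : ∀ v ∈ S, ‖v - c‖ ≤ ρ) :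
    ∃ T : Finset (EuclideanSpace ℝ (Fin d)), (∀ v ∈ T, v ∈ S) ∧
      (T.card : ℝ) ≤ 2 * Real.exp (4 * Real.log (4 * n) * ρ ^ 2 / ε ^ 2) ∧
      ∀ v ∈ S, ∃ w ∈ T, ∀ j, |inner ℝ (v - w) (a j)| ≤ ε := by
  classical
  set B := 2 * Real.exp (4 * Real.log (4 * n) * ρ ^ 2 / ε ^ 2)
  let P : ℕ → Prop := fun k => ∃ T : Finset (EuclideanSpace ℝ (Fin d)), T.card = k ∧
    (∀ v ∈ T, v ∈ S) ∧ (∀ v ∈ T, ∀ w ∈ T, v ≠ w → ∃ j, ε < |inner ℝ (v - w) (a j)|)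
  have hPb : ∀ k, P k → k ≤ ⌊B⌋₊ := by
    rintro k ⟨T, rfl, hTS, hsep⟩
    exact Nat.le_floor (packing_bound a ha n hn1 hn c ρ ε hε T (fun v hv => hS v (hTS v hv)) hsep)
  have hP0 : P 0 := ⟨∅, by simp⟩
  obtain ⟨T, hTc, hTS, hsep⟩ := Nat.findGreatest_spec (P := P) (Nat.zero_le ⌊B⌋₊) hP0
  refine ⟨T, hTS, packing_bound a ha n hn1 hn c ρ ε hε T (fun v hv => hS v (hTS v hv)) hsep, ?_⟩
  intro v hv
  by_contra hc
  push Not at hc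
  have hvT : v ∉ T := by
    intro hvT
    obtain ⟨j, hj⟩ := hc v hvT
    simp at hj; linarith
  have hP : P (T.card + 1) := by
    refine ⟨insert v T, Finset.card_insert_of_notMem hvT, ?_, ?_⟩
    · intro w hw
      rcases Finset.mem_insert.1 hw with rfl | h
      exacts [hv, hTS w h]
    · intro w hw z hz hwz
      rcases Finset.mem_insert.1 hw with rfl | hw' <;> rcases Finset.mem_insert.1 hz with rfl | hz'
      · exact absurd rfl hwz
      · exact hc z hz'
      · obtain ⟨j, hj⟩ := hc w hw'
        refine ⟨j, ?_⟩
        rw [← neg_sub, inner_neg_left, abs_neg]; exact hj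
      · exact hsep w hw' z hz' hwz
  have := Nat.le_findGreatest (hPb _ hP) hP
  omega



/-- Lower-tail Chernoff bound plus union bound on a finite probability space. -/
theorem exists_good_sample {ι H : Type*} [Fintype ι] (τ : ι → ℝ)
    (hτ : ∀ i, 0 ≤ τ i) (hτ1 : ∑ i, τ i = 1) (T : Finset H) (Y : H → ι → ℝ) (V Q : H → ℝ)
    (hY0 : ∀ h ∈ T, ∀ i, 0 ≤ Y h i) (hYV : ∀ h ∈ T, ∀ i, Y h i ≤ V h)
    (hV : ∀ h ∈ T, 0 < V h)
    (hQ : ∀ h ∈ T, Q h ≤ ∑ i, τ i * Y h i) (m : ℕ)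
    (hsum : ∑ h ∈ T, Real.exp (-(m * Q h / (4 * V h))) < 1) :
    ∃ x : Fin m → ι, ∀ h ∈ T, m * Q h / 4 ≤ ∑ j, Y h (x j) := by
  classical
  by_contra hcon
  push Not at hcon
  -- total mass one
  have htot : ∑ x : Fin m → ι, ∏ j, τ (x j) = 1 := by
    have := Finset.prod_univ_sum (fun _ : Fin m => (Finset.univ : Finset ι)) (fun _ i => τ i)
    simp only [hτ1, Finset.prod_const_one, Fintype.piFinset_univ] at this
    exact this.symm
  have hmgf : ∀ h ∈ T, ∑ x : Fin m → ι, (∏ j, τ (x j)) * Real.exp (-(∑ j, Y h (x j) / V h))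
      ≤ Real.exp (-(m * Q h / (2 * V h))) := by
    intro h hh
    have h1 : ∑ x : Fin m → ι, (∏ j, τ (x j)) * Real.exp (-(∑ j, Y h (x j) / V h))
        = (∑ i, τ i * Real.exp (-(Y h i / V h))) ^ m := by
      have := Finset.prod_univ_sum (fun _ : Fin m => (Finset.univ : Finset ι))
        (fun _ i => τ i * Real.exp (-(Y h i / V h)))
      simp only [Finset.prod_const, Finset.card_univ, Fintype.card_fin, Fintype.piFinset_univ] at this
      rw [this]
      refine Finset.sum_congr rfl fun x _ => ?_
      rw [Finset.prod_mul_distrib, ← Real.exp_sum, Finset.sum_neg_distrib]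
    rw [h1]
    have h2 : ∑ i, τ i * Real.exp (-(Y h i / V h)) ≤ Real.exp (-(Q h / (2 * V h))) := by
      calc ∑ i, τ i * Real.exp (-(Y h i / V h)) ≤ ∑ i, τ i * (1 - Y h i / V h / 2) := by
            refine Finset.sum_le_sum fun i _ => mul_le_mul_of_nonneg_left ?_ (hτ i)
            have y0 : 0 ≤ Y h i / V h := div_nonneg (hY0 h hh i) (hV h hh).le
            have y1 : Y h i / V h ≤ 1 := (div_le_one (hV h hh)).2 (hYV h hh i)
            set y := Y h i / V h
            have e1 : 1 + y ≤ Real.exp y := by linarith [Real.add_one_le_exp y]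
            rw [Real.exp_neg]
            have : (Real.exp y)⁻¹ ≤ (1 + y)⁻¹ := inv_anti₀ (by linarith) e1
            refine this.trans ?_
            rw [inv_le_iff_one_le_mul₀ (by linarith)]
            nlinarith
        _ = 1 - (∑ i, τ i * Y h i) / (2 * V h) := by
            rw [Finset.sum_div, ← hτ1, ← Finset.sum_sub_distrib]
            refine Finset.sum_congr rfl fun i _ => ?_
            have := (hV h hh).ne'
            field_simp
            rw [hτ1, one_mul]
        _ ≤ 1 - Q h / (2 * V h) := by
            have := hV h hh
            have := hQ h hh
            gcongr
        _ ≤ _ := by linarith [Real.add_one_le_exp (-(Q h / (2 * V h)))]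
    have h0 : 0 ≤ ∑ i, τ i * Real.exp (-(Y h i / V h)) :=
      Finset.sum_nonneg fun i _ => mul_nonneg (hτ i) (Real.exp_pos _).le
    calc _ ≤ (Real.exp (-(Q h / (2 * V h)))) ^ m := pow_le_pow_left₀ h0 h2 m
      _ = _ := by rw [← Real.exp_nat_mul]; congr 1; ring
  have key : (1 : ℝ) ≤ ∑ h ∈ T, Real.exp (-(m * Q h / (4 * V h))) := by
    calc (1 : ℝ) = ∑ x : Fin m → ι, ∏ j, τ (x j) := htot.symm
      _ ≤ ∑ x : Fin m → ι, ∑ h ∈ T, Real.exp (m * Q h / (4 * V h)) *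
            ((∏ j, τ (x j)) * Real.exp (-(∑ j, Y h (x j) / V h))) := by
          refine Finset.sum_le_sum fun x _ => ?_
          obtain ⟨h, hh, hlt⟩ := hcon x
          have hp : 0 ≤ ∏ j, τ (x j) := Finset.prod_nonneg fun j _ => hτ _
          refine le_trans ?_ (Finset.single_le_sum (f := fun h => Real.exp (m * Q h / (4 * V h)) *
            ((∏ j, τ (x j)) * Real.exp (-(∑ j, Y h (x j) / V h)))) (fun g _ => by positivity) hh)
          have : 1 ≤ Real.exp (m * Q h / (4 * V h)) * Real.exp (-(∑ j, Y h (x j) / V h)) := by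
            rw [← Real.exp_add]
            apply Real.one_le_exp
            have hv := hV h hh
            rw [← Finset.sum_div]
            have : (∑ j, Y h (x j)) / V h ≤ (m * Q h / 4) / V h := by gcongr
            have e : (m * Q h / 4) / V h = m * Q h / (4 * V h) := by field_simp
            linarith
          nlinarith
      _ = ∑ h ∈ T, Real.exp (m * Q h / (4 * V h)) * ∑ x : Fin m → ι,
            ((∏ j, τ (x j)) * Real.exp (-(∑ j, Y h (x j) / V h))) := by
          rw [Finset.sum_comm]; simp_rw [Finset.mul_sum]
      _ ≤ ∑ h ∈ T, Real.exp (m * Q h / (4 * V h)) * Real.exp (-(m * Q h / (2 * V h))) := by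
          refine Finset.sum_le_sum fun h hh => ?_
          exact mul_le_mul_of_nonneg_left (hmgf h hh) (Real.exp_pos _).le
      _ = _ := by
          refine Finset.sum_congr rfl fun h hh => ?_
          rw [← Real.exp_add]; congr 1
          have := (hV h hh).ne'
          field_simp; ring
  linarith


theorem PhiOK.scale {Φ : ℝ → ℝ} {r : ℝ} {q : ℕ} (h : PhiOK Φ r q) (hr : 1 ≤ r) (w s t : ℝ)
    (hw : 0 ≤ w) (hs : 0 ≤ s) (hst : s ≤ t) (ht : 0 < t) : Φ (w * s) ≤ s / t * Φ (w * t) := by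
  rcases hs.eq_or_lt with rfl | hs0
  · simp [h.zero]
  · have h1 := h.low1 hr (t / s) (w * s) ((one_le_div hs0).2 hst) (by positivity)
    have e : t / s * (w * s) = w * t := by field_simp
    rw [e] at h1
    have h2 := mul_le_mul_of_nonneg_left h1 (by positivity : 0 ≤ s / t)
    refine le_trans (le_of_eq ?_) h2
    field_simp

/-- Unit directions. -/
noncomputable def nu {ι : Type*} {d : ℕ} (u : ι → EuclideanSpace ℝ (Fin d)) (i : ι) :
    EuclideanSpace ℝ (Fin d) := ‖u i‖⁻¹ • u i

theorem nu_norm {ι : Type*} {d : ℕ} (u : ι → EuclideanSpace ℝ (Fin d)) (i : ι) :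
    ‖nu u i‖ ≤ 1 := by
  rw [nu, norm_smul, norm_inv, norm_norm]
  exact inv_mul_le_one

theorem nu_inner {ι : Type*} {d : ℕ} (u : ι → EuclideanSpace ℝ (Fin d)) (i : ι)
    (v : EuclideanSpace ℝ (Fin d)) : inner ℝ v (u i) = ‖u i‖ * inner ℝ v (nu u i) := by
  rw [nu, inner_smul_right]
  by_cases h : u i = 0
  · simp [h]
  · have : ‖u i‖ ≠ 0 := norm_ne_zero_iff.2 h
    field_simp

theorem nu_inner_abs {ι : Type*} {d : ℕ} (u : ι → EuclideanSpace ℝ (Fin d)) (i : ι)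
    (v : EuclideanSpace ℝ (Fin d)) : |inner ℝ v (u i)| = ‖u i‖ * |inner ℝ v (nu u i)| := by
  rw [nu_inner, abs_mul, abs_norm]

theorem nu_inner_le {ι : Type*} {d : ℕ} (u : ι → EuclideanSpace ℝ (Fin d)) (i : ι)
    (v : EuclideanSpace ℝ (Fin d)) : |inner ℝ v (nu u i)| ≤ ‖v‖ := by
  refine (abs_real_inner_le_norm v _).trans ?_
  exact mul_le_of_le_one_right (norm_nonneg _) (nu_norm u i)

/-- Position data. -/
structure LPos (Φ : ℝ → ℝ) (r : ℝ) (q : ℕ) {ι : Type*} [Fintype ι] (μ : ι → ℝ) (d N : ℕ)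
    (u : ι → EuclideanSpace ℝ (Fin d)) : Prop where
  ok : PhiOK Φ r q
  r1 : 1 ≤ r
  r2 : r ≤ 2
  N1 : 1 ≤ N
  dN : d ≤ N
  μpos : ∀ i, 0 < μ i
  μsum : ∑ i, μ i = 1
  Z : ∑ i, μ i * Φ ‖u i‖ ≤ 2
  L : ∀ v : EuclideanSpace ℝ (Fin d),
    ‖v‖ ^ 2 ≤ d * 2 ^ (q + 2) * ∑ i, μ i * Φ ‖u i‖ * (inner ℝ v (nu u i)) ^ 2

/-- The unit modular set. -/
def ModSet (Φ : ℝ → ℝ) {ι : Type*} [Fintype ι] (μ : ι → ℝ) {d : ℕ}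
    (u : ι → EuclideanSpace ℝ (Fin d)) : Set (EuclideanSpace ℝ (Fin d)) :=
  {v | ∑ i, μ i * Φ |inner ℝ v (u i)| ≤ 1}

/-- The dimension constant. -/
noncomputable def AN (q N : ℕ) : ℝ := 2 ^ (q + 7) * N

section
variable {Φ : ℝ → ℝ} {r : ℝ} {q : ℕ} {ι : Type*} [Fintype ι] {μ : ι → ℝ} {d N : ℕ}
    {u : ι → EuclideanSpace ℝ (Fin d)}

theorem LPos.zero_mem (h : LPos Φ r q μ d N u) : (0 : EuclideanSpace ℝ (Fin d)) ∈ ModSet Φ μ u := by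
  simp [ModSet, h.ok.zero]

theorem LPos.AN1 (h : LPos Φ r q μ d N u) : 1 ≤ AN q N := by
  have h1 : (1 : ℝ) ≤ N := by exact_mod_cast h.N1
  have h2 : (1 : ℝ) ≤ 2 ^ (q + 7) := one_le_pow₀ (by norm_num)
  unfold AN; nlinarith

theorem LPos.νnn (h : LPos Φ r q μ d N u) (i : ι) : 0 ≤ μ i * Φ ‖u i‖ :=
  mul_nonneg (h.μpos i).le (h.ok.nonneg _ (norm_nonneg _))

theorem LPos.rmom (h : LPos Φ r q μ d N u) {v : EuclideanSpace ℝ (Fin d)} (hv : v ∈ ModSet Φ μ u) :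
    ∑ i, μ i * Φ ‖u i‖ * |inner ℝ v (nu u i)| ^ r ≤ 3 := by
  have h1 : ∀ i ∈ Finset.univ, μ i * Φ ‖u i‖ * |inner ℝ v (nu u i)| ^ r ≤
      μ i * Φ ‖u i‖ + μ i * Φ |inner ℝ v (u i)| := by
    intro i _
    have h2 := h.νnn i
    have h3 := h.ok.nonneg _ (abs_nonneg (inner ℝ v (u i)))
    have h4 := h.μpos i
    rcases le_total |inner ℝ v (nu u i)| 1 with hc | hc
    · have : |inner ℝ v (nu u i)| ^ r ≤ 1 :=
        Real.rpow_le_one (abs_nonneg _) hc (by linarith [h.r1])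
      have := mul_le_mul_of_nonneg_left this h2
      have := mul_nonneg h4.le h3
      linarith
    · have h5 := h.ok.low _ ‖u i‖ hc (norm_nonneg _)
      rw [mul_comm _ ‖u i‖, ← nu_inner_abs] at h5
      have h6 := mul_le_mul_of_nonneg_left h5 h4.le
      calc _ = μ i * (|inner ℝ v (nu u i)| ^ r * Φ ‖u i‖) := by ring
        _ ≤ _ := by linarith
  refine (Finset.sum_le_sum h1).trans ?_
  rw [Finset.sum_add_distrib]
  have := h.Z
  have h7 : ∑ i, μ i * Φ |inner ℝ v (u i)| ≤ 1 := hv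
  linarith

theorem LPos.sdiff (h : LPos Φ r q μ d N u) {v v' : EuclideanSpace ℝ (Fin d)}
    (hv : v ∈ ModSet Φ μ u) (hv' : v' ∈ ModSet Φ μ u) {s : ℝ} (hs : 0 < s)
    (hd : ∀ i, |inner ℝ (v - v') (nu u i)| ≤ s) : ‖v - v'‖ ^ 2 ≤ AN q N * s ^ (2 - r) := by
  have key : ∀ i ∈ Finset.univ, μ i * Φ ‖u i‖ * (inner ℝ (v - v') (nu u i)) ^ 2 ≤
      s ^ (2 - r) * (4 * (μ i * Φ ‖u i‖ * |inner ℝ v (nu u i)| ^ r) +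
        4 * (μ i * Φ ‖u i‖ * |inner ℝ v' (nu u i)| ^ r)) := by
    intro i _
    set x : ℝ := inner ℝ v (nu u i)
    set y : ℝ := inner ℝ v' (nu u i)
    have hxy : (inner ℝ (v - v') (nu u i) : ℝ) = x - y := inner_sub_left _ _ _
    have hd' := hd i
    rw [hxy] at hd' ⊢
    have h1 : (x - y) ^ 2 = |x - y| ^ (2 - r) * |x - y| ^ r := by
      rcases eq_or_lt_of_le (abs_nonneg (x - y)) with h0 | h0
      · rw [← h0, Real.zero_rpow (by linarith [h.r1] : r ≠ 0), mul_zero, ← sq_abs, ← h0]; simp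
      · rw [← Real.rpow_add h0, ← sq_abs]; norm_num
    have h2 : |x - y| ^ (2 - r) ≤ s ^ (2 - r) :=
      Real.rpow_le_rpow (abs_nonneg _) hd' (by linarith [h.r2])
    have h3 : |x - y| ^ r ≤ 4 * |x| ^ r + 4 * |y| ^ r := by
      have hx0 : 0 ≤ |x| ^ r := Real.rpow_nonneg (abs_nonneg _) _
      have hy0 : 0 ≤ |y| ^ r := Real.rpow_nonneg (abs_nonneg _) _
      have hm : ∀ z : ℝ, 0 ≤ z → |x - y| ≤ 2 * z → |x - y| ^ r ≤ 4 * z ^ r := by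
        intro z hz hle
        refine (Real.rpow_le_rpow (abs_nonneg _) hle (by linarith [h.r1])).trans ?_
        rw [Real.mul_rpow (by norm_num) hz]
        refine mul_le_mul_of_nonneg_right ?_ (Real.rpow_nonneg hz _)
        calc (2 : ℝ) ^ r ≤ 2 ^ (2 : ℝ) := Real.rpow_le_rpow_of_exponent_le (by norm_num) h.r2
          _ = 4 := by norm_num
      have ht : |x - y| ≤ |x| + |y| := abs_sub x y
      rcases le_total |x| |y| with hc | hc
      · linarith [hm |y| (abs_nonneg _) (by linarith)]
      · linarith [hm |x| (abs_nonneg _) (by linarith)]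
    have h4 : (x - y) ^ 2 ≤ s ^ (2 - r) * (4 * |x| ^ r + 4 * |y| ^ r) := by
      rw [h1]
      exact mul_le_mul h2 h3 (Real.rpow_nonneg (abs_nonneg _) _) (Real.rpow_nonneg hs.le _)
    refine (mul_le_mul_of_nonneg_left h4 (h.νnn i)).trans_eq ?_
    ring
  have h5 := Finset.sum_le_sum key
  rw [← Finset.mul_sum, Finset.sum_add_distrib, ← Finset.mul_sum, ← Finset.mul_sum] at h5
  have hs0 : 0 ≤ s ^ (2 - r) := Real.rpow_nonneg hs.le _
  have h6 : ∑ i, μ i * Φ ‖u i‖ * (inner ℝ (v - v') (nu u i)) ^ 2 ≤ s ^ (2 - r) * 32 := by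
    refine h5.trans (mul_le_mul_of_nonneg_left ?_ hs0)
    linarith [h.rmom hv, h.rmom hv']
  refine (h.L (v - v')).trans ?_
  have hdN : (d : ℝ) ≤ N := by exact_mod_cast h.dN
  calc (d : ℝ) * 2 ^ (q + 2) * ∑ i, μ i * Φ ‖u i‖ * (inner ℝ (v - v') (nu u i)) ^ 2
      ≤ (d : ℝ) * 2 ^ (q + 2) * (s ^ (2 - r) * 32) := by gcongr
    _ ≤ (N : ℝ) * 2 ^ (q + 2) * (s ^ (2 - r) * 32) := by gcongr
    _ = _ := by unfold AN; ring

theorem LPos.snorm (h : LPos Φ r q μ d N u) {v : EuclideanSpace ℝ (Fin d)}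
    (hv : v ∈ ModSet Φ μ u) : ‖v‖ ≤ AN q N ^ (1 / r) := by
  have hr : 0 < r := by linarith [h.r1]
  have hA : 0 < AN q N := by linarith [h.AN1]
  rcases eq_or_lt_of_le (norm_nonneg v) with h0 | h0
  · rw [← h0]; exact Real.rpow_nonneg hA.le _
  have h1 := h.sdiff hv h.zero_mem h0 (fun i => by rw [sub_zero]; exact nu_inner_le u i v)
  rw [sub_zero] at h1
  have h2 : ‖v‖ ^ r ≤ AN q N := by
    have e : ‖v‖ ^ 2 = ‖v‖ ^ r * ‖v‖ ^ (2 - r) := by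
      rw [← Real.rpow_add h0, add_sub_cancel, Real.rpow_two]
    rw [e] at h1
    exact le_of_mul_le_mul_right h1 (Real.rpow_pos_of_pos h0 _)
  calc ‖v‖ = (‖v‖ ^ r) ^ (1 / r) := by
        rw [← Real.rpow_mul h0.le, mul_one_div_cancel hr.ne', Real.rpow_one]
    _ ≤ _ := Real.rpow_le_rpow (Real.rpow_nonneg h0.le _) h2 (by positivity)

/-- A net of the modular set, in the sup metric over the directions. -/
def IsNet (Φ : ℝ → ℝ) {ι : Type*} [Fintype ι] (μ : ι → ℝ) {d : ℕ}
    (u : ι → EuclideanSpace ℝ (Fin d)) (T : Finset (EuclideanSpace ℝ (Fin d))) (s : ℝ) : Prop :=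
  (∀ v ∈ T, v ∈ ModSet Φ μ u) ∧ ∀ v ∈ ModSet Φ μ u, ∃ w ∈ T, ∀ i, |inner ℝ (v - w) (nu u i)| ≤ s

theorem LPos.scale_pos (h : LPos Φ r q μ d N u) (j : ℕ) : 0 < AN q N ^ (1 / r) / 2 ^ j := by
  have hA : 0 < AN q N := by linarith [h.AN1]
  positivity

theorem LPos.scale_rpow (h : LPos Φ r q μ d N u) (j : ℕ) :
    1 ≤ AN q N * (AN q N ^ (1 / r) / 2 ^ j) ^ (-r) := by
  have hr : 0 < r := by linarith [h.r1]
  have hA : 0 < AN q N := by linarith [h.AN1]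
  have h1 : (AN q N ^ (1 / r) / 2 ^ j) ^ r ≤ AN q N := by
    calc (AN q N ^ (1 / r) / 2 ^ j) ^ r ≤ (AN q N ^ (1 / r)) ^ r := by
          refine Real.rpow_le_rpow (h.scale_pos j).le ?_ hr.le
          exact div_le_self (by positivity) (one_le_pow₀ (by norm_num))
      _ = AN q N := by
          rw [← Real.rpow_mul hA.le, one_div_mul_cancel hr.ne', Real.rpow_one]
  rw [Real.rpow_neg (h.scale_pos j).le, ← div_eq_mul_inv, one_le_div
    (Real.rpow_pos_of_pos (h.scale_pos j) _)]
  exact h1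

theorem LPos.fine_net (h : LPos Φ r q μ d N u) (n : ℝ) (hn1 : 1 ≤ n)
    (hn : (Fintype.card ι : ℝ) ≤ n) (j : ℕ) :
    ∃ T, IsNet Φ μ u T (AN q N ^ (1 / r) / 2 ^ j) ∧
      (T.card : ℝ) ≤ Real.exp (17 * Real.log (4 * n) * AN q N *
        (AN q N ^ (1 / r) / 2 ^ j) ^ (-r)) := by
  classical
  have hA : 0 < AN q N := by linarith [h.AN1]
  have hl0 : 1 ≤ Real.log (4 * n) := by
    rw [Real.le_log_iff_exp_le (by linarith)]
    have := Real.exp_one_lt_d9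
    linarith
  induction j with
  | zero =>
    refine ⟨{0}, ⟨by simpa using h.zero_mem, fun v hv => ⟨0, by simp, fun i => ?_⟩⟩, ?_⟩
    · rw [sub_zero, pow_zero, div_one]
      exact (nu_inner_le u i v).trans (h.snorm hv)
    · simp only [Finset.card_singleton, Nat.cast_one]
      apply Real.one_le_exp
      have := Real.rpow_nonneg (h.scale_pos 0).le (-r)
      positivity
  | succ j ih =>
    obtain ⟨T, ⟨hTS, hT⟩, hcard⟩ := ih
    have hs := h.scale_pos j
    have hsr := h.scale_rpow j
    have es : AN q N ^ (1 / r) / 2 ^ (j + 1) = AN q N ^ (1 / r) / 2 ^ j / 2 := by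
      rw [pow_succ]; field_simp
    rw [es]
    set s := AN q N ^ (1 / r) / 2 ^ j
    have hex : ∀ w : EuclideanSpace ℝ (Fin d), ∃ T' : Finset (EuclideanSpace ℝ (Fin d)),
        w ∈ T → (∀ v ∈ T', v ∈ ModSet Φ μ u) ∧
        (T'.card : ℝ) ≤ 2 * Real.exp (16 * Real.log (4 * n) * (AN q N * s ^ (-r))) ∧
        ∀ v ∈ ModSet Φ μ u, (∀ i, |inner ℝ (v - w) (nu u i)| ≤ s) →
          ∃ z ∈ T', ∀ i, |inner ℝ (v - z) (nu u i)| ≤ s / 2 := by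
      intro w
      by_cases hw : w ∈ T
      · obtain ⟨T', h1, h2, h3⟩ := net_exists (nu u) (nu_norm u) n hn1 hn w
          (Real.sqrt (AN q N * s ^ (2 - r))) (s / 2) (by positivity)
          {v | v ∈ ModSet Φ μ u ∧ ∀ i, |inner ℝ (v - w) (nu u i)| ≤ s} (by
            rintro v ⟨hv, hvw⟩
            exact Real.le_sqrt_of_sq_le (h.sdiff hv (hTS w hw) hs hvw))
        refine ⟨T', fun _ => ⟨fun v hv => (h1 v hv).1, ?_, fun v hv hvw => h3 v ⟨hv, hvw⟩⟩⟩
        refine h2.trans_eq ?_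
        rw [Real.sq_sqrt (mul_nonneg hA.le (Real.rpow_nonneg hs.le _))]
        have e : s ^ (2 - r) = s ^ 2 * s ^ (-r) := by
          rw [sub_eq_add_neg, Real.rpow_add hs, Real.rpow_two]
        rw [e]
        congr 2
        field_simp
        ring
      · exact ⟨∅, fun hc => absurd hc hw⟩
    choose G hG using hex
    refine ⟨T.biUnion G, ⟨?_, ?_⟩, ?_⟩
    · intro v hv
      obtain ⟨w, hw, hvw⟩ := Finset.mem_biUnion.1 hv
      exact (hG w hw).1 v hvw
    · intro v hv
      obtain ⟨w, hw, hvw⟩ := hT v hv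
      obtain ⟨z, hz, hvz⟩ := (hG w hw).2.2 v hv hvw
      exact ⟨z, Finset.mem_biUnion.2 ⟨w, hw, hz⟩, hvz⟩
    · set B := 2 * Real.exp (16 * Real.log (4 * n) * (AN q N * s ^ (-r))) with hB
      have h1 : ((T.biUnion G).card : ℝ) ≤ T.card * B := by
        have : ((T.biUnion G).card : ℝ) ≤ ∑ w ∈ T, ((G w).card : ℝ) := by
          exact_mod_cast Finset.card_biUnion_le
        refine this.trans ?_
        rw [← nsmul_eq_mul]
        exact Finset.sum_le_card_nsmul _ _ _ fun w hw => (hG w hw).2.1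
      have hB0 : 0 ≤ B := by positivity
      refine h1.trans ((mul_le_mul_of_nonneg_right hcard hB0).trans ?_)
      have e2 : B ≤ Real.exp (1 + 16 * Real.log (4 * n) * (AN q N * s ^ (-r))) := by
        rw [hB, Real.exp_add]
        refine mul_le_mul_of_nonneg_right ?_ (Real.exp_pos _).le
        have := Real.exp_one_gt_d9
        linarith
      have e3 : 2 * s ^ (-r) ≤ (s / 2) ^ (-r) := by
        rw [Real.div_rpow hs.le (by norm_num), Real.rpow_neg (by norm_num : (0:ℝ) ≤ 2), div_inv_eq_mul,
          mul_comm]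
        refine mul_le_mul_of_nonneg_left ?_ (Real.rpow_nonneg hs.le _)
        calc (2 : ℝ) = 2 ^ (1 : ℝ) := by simp
          _ ≤ 2 ^ r := Real.rpow_le_rpow_of_exponent_le (by norm_num) h.r1
      calc _ ≤ Real.exp (17 * Real.log (4 * n) * AN q N * s ^ (-r)) *
            Real.exp (1 + 16 * Real.log (4 * n) * (AN q N * s ^ (-r))) :=
            mul_le_mul_of_nonneg_left e2 (Real.exp_pos _).le
        _ ≤ _ := by
            rw [← Real.exp_add]
            apply Real.exp_le_exp.2
            have e4 : 17 * Real.log (4 * n) * AN q N * (2 * s ^ (-r)) ≤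
              17 * Real.log (4 * n) * AN q N * (s / 2) ^ (-r) :=
              mul_le_mul_of_nonneg_left e3 (by positivity)
            have e5 : 1 ≤ Real.log (4 * n) * (AN q N * s ^ (-r)) := by nlinarith
            linarith

theorem LPos.crude_net (h : LPos Φ r q μ d N u) (j : ℕ) (hj : 1 / 32 ≤ AN q N ^ (1 / r) / 2 ^ j) :
    ∃ T, IsNet Φ μ u T (AN q N ^ (1 / r) / 2 ^ j) ∧
      (T.card : ℝ) ≤ Real.exp (129 * Real.log (4 * N) * AN q N ^ 3 *
        (AN q N ^ (1 / r) / 2 ^ j) ^ (-r)) := by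
  have hA1 := h.AN1
  have hA : 0 < AN q N := by linarith [h.AN1]
  have hs := h.scale_pos j
  have hsr := h.scale_rpow j
  set s := AN q N ^ (1 / r) / 2 ^ j
  have hN : (1 : ℝ) ≤ N := by exact_mod_cast h.N1
  have hdN : (d : ℝ) ≤ N := by exact_mod_cast h.dN
  have hsN : 0 < Real.sqrt N := Real.sqrt_pos.2 (by linarith)
  have hl0 : 1 ≤ Real.log (4 * N) := by
    rw [Real.le_log_iff_exp_le (by linarith)]
    have := Real.exp_one_lt_d9
    linarith
  have hR : AN q N ^ (1 / r) ≤ AN q N := by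
    calc AN q N ^ (1 / r) ≤ AN q N ^ (1 : ℝ) :=
          Real.rpow_le_rpow_of_exponent_le hA1 ((div_le_one (by linarith [h.r1])).2 h.r1)
      _ = _ := Real.rpow_one _
  obtain ⟨T, h1, h2, h3⟩ := net_exists (fun k : Fin d => EuclideanSpace.single k (1 : ℝ))
    (by simp) N hN (by simpa using hdN) 0 (AN q N) (s / Real.sqrt N) (by positivity)
    (ModSet Φ μ u) (fun v hv => by rw [sub_zero]; exact (h.snorm hv).trans hR)
  refine ⟨T, ⟨h1, fun v hv => ?_⟩, ?_⟩
  · obtain ⟨w, hw, hvw⟩ := h3 v hv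
    refine ⟨w, hw, fun i => (nu_inner_le u i _).trans ?_⟩
    rw [EuclideanSpace.norm_eq]
    apply Real.sqrt_le_iff.2 ⟨hs.le, ?_⟩
    have h4 : ∀ k ∈ (Finset.univ : Finset (Fin d)), ‖(v - w) k‖ ^ 2 ≤ (s / Real.sqrt N) ^ 2 := by
      intro k _
      have := hvw k
      rw [EuclideanSpace.inner_single_right] at this
      simp only [one_mul, conj_trivial] at this
      rw [Real.norm_eq_abs]
      exact pow_le_pow_left₀ (abs_nonneg _) this 2
    refine (Finset.sum_le_card_nsmul _ _ _ h4).trans ?_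
    rw [Finset.card_univ, Fintype.card_fin, nsmul_eq_mul, div_pow, Real.sq_sqrt (by linarith)]
    rw [mul_div_assoc', div_le_iff₀ (by linarith), mul_comm]
    exact mul_le_mul_of_nonneg_left hdN (by positivity)
  · refine h2.trans ?_
    have e1 : (s / Real.sqrt N) ^ 2 = s ^ 2 / N := by
      rw [div_pow, Real.sq_sqrt (by linarith)]
    have e2 : 1 / s ^ 2 ≤ 32 * s ^ (-r) := by
      have : s ^ (-r) = s ^ (2 - r) * (1 / s ^ 2) := by
        rw [← Real.rpow_two, one_div, ← Real.rpow_neg hs.le, ← Real.rpow_add hs]; ring_nf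
      rw [this]
      have h5 : 1 ≤ 32 * s ^ (2 - r) := by
        rcases le_total 1 s with hc | hc
        · have := Real.one_le_rpow hc (by linarith [h.r2] : 0 ≤ 2 - r)
          linarith
        · have : s ^ (1 : ℝ) ≤ s ^ (2 - r) :=
            Real.rpow_le_rpow_of_exponent_ge hs hc (by linarith [h.r1])
          rw [Real.rpow_one] at this
          linarith
      have h6 : 0 ≤ 1 / s ^ 2 := by positivity
      nlinarith
    have hNA : (N : ℝ) ≤ AN q N := by
      unfold AN
      have : (1 : ℝ) ≤ 2 ^ (q + 7) := one_le_pow₀ (by norm_num)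
      nlinarith
    have e3 : 4 * Real.log (4 * N) * AN q N ^ 2 / (s / Real.sqrt N) ^ 2 ≤
        128 * Real.log (4 * N) * AN q N ^ 3 * s ^ (-r) := by
      rw [e1]
      calc 4 * Real.log (4 * N) * AN q N ^ 2 / (s ^ 2 / N)
          = 4 * Real.log (4 * N) * AN q N ^ 2 * N * (1 / s ^ 2) := by field_simp
        _ ≤ 4 * Real.log (4 * N) * AN q N ^ 2 * AN q N * (32 * s ^ (-r)) := by gcongr
        _ = _ := by ring
    have e4 : 1 ≤ Real.log (4 * N) * AN q N ^ 3 * s ^ (-r) := by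
      have h7 : 1 ≤ Real.log (4 * N) * AN q N ^ 2 := by
        have : 1 ≤ AN q N ^ 2 := one_le_pow₀ hA1
        nlinarith
      calc (1 : ℝ) ≤ (Real.log (4 * N) * AN q N ^ 2) * (AN q N * s ^ (-r)) := by nlinarith
        _ = _ := by ring
    calc 2 * Real.exp (4 * Real.log (4 * N) * AN q N ^ 2 / (s / Real.sqrt N) ^ 2)
        ≤ Real.exp 1 * Real.exp (128 * Real.log (4 * N) * AN q N ^ 3 * s ^ (-r)) := by
          have := Real.exp_one_gt_d9
          exact mul_le_mul (by linarith) (Real.exp_le_exp.2 e3) (Real.exp_pos _).le (Real.exp_pos _).le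
      _ ≤ _ := by
          rw [← Real.exp_add]
          apply Real.exp_le_exp.2
          linarith

end


theorem geo_sum (L : ℕ) : ∀ c B : ℝ, 0 ≤ c → 0 ≤ B →
    (∑ j ∈ Finset.range L, if c / 2 ^ j ≤ B then c / 2 ^ j else 0) ≤ 2 * B ∧
    (∑ j ∈ Finset.range L, if c / 2 ^ j ≤ B then c / 2 ^ j else 0) ≤ 2 * c := by
  induction L with
  | zero => intro c B hc hB; simp [hc, hB]
  | succ L ih =>
    intro c B hc hB
    have h1 := ih (c / 2) B (by linarith) hB
    have e : ∀ j : ℕ, c / 2 ^ (j + 1) = c / 2 / 2 ^ j := fun j => by rw [pow_succ]; field_simp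
    rw [Finset.sum_range_succ']
    simp only [e, pow_zero, div_one]
    obtain ⟨h2, h3⟩ := h1
    split_ifs with hcB
    · constructor <;> linarith
    · constructor <;> linarith

section
variable {Φ : ℝ → ℝ} {r : ℝ} {q : ℕ}

theorem PhiOK.level_low (h : PhiOK Φ r q) (hr : 1 ≤ r) (w g c : ℝ) (hw : 0 ≤ w) (hg : 0 ≤ g)
    (hc : 0 < c) (hgc : g < c) (n : ℕ) (hn : c / 2 ^ (n + 1) ≤ 1 / 4) :
    Φ (w * g) ≤ 1 / 4 * Φ w + 2 ^ q * ∑ j ∈ Finset.range (n + 2),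
      (if c / 2 ^ j ≤ g then Φ (w * (c / 2 ^ j)) else 0) := by
  classical
  have hnn : ∀ j ∈ Finset.range (n + 2),
      0 ≤ (if c / 2 ^ j ≤ g then Φ (w * (c / 2 ^ j)) else 0) := by
    intro j _
    split_ifs
    · exact h.nonneg _ (by positivity)
    · exact le_rfl
  have hw0 := h.nonneg w hw
  by_cases hex : ∃ j, j < n + 2 ∧ c / 2 ^ j ≤ g
  · obtain ⟨hj1, hj2⟩ := Nat.find_spec hex
    have hmin := fun k => Nat.find_min hex (m := k)
    set j := Nat.find hex
    have hj0 : j ≠ 0 := by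
      intro h0
      rw [h0, pow_zero, div_one] at hj2
      linarith
    obtain ⟨k, hk⟩ := Nat.exists_eq_succ_of_ne_zero hj0
    have h1 := hmin k (by omega)
    have h2 : g ≤ 2 * (c / 2 ^ j) := by
      by_contra hcon
      push Not at hcon
      apply h1
      refine ⟨by omega, ?_⟩
      have : c / 2 ^ k = 2 * (c / 2 ^ j) := by rw [hk, pow_succ]; field_simp
      linarith
    have h3 : Φ (w * g) ≤ 2 ^ q * Φ (w * (c / 2 ^ j)) := by
      refine (h.mono _ (2 * (w * (c / 2 ^ j))) (by positivity) ?_).trans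
        (h.up 2 _ (by norm_num) (by positivity))
      have := mul_le_mul_of_nonneg_left h2 hw
      linarith
    have h4 := Finset.single_le_sum hnn (Finset.mem_range.2 hj1)
    rw [if_pos hj2] at h4
    have h5 := mul_le_mul_of_nonneg_left h4 (by positivity : (0:ℝ) ≤ 2 ^ q)
    linarith
  · push Not at hex
    have h1 := hex (n + 1) (by omega)
    have h2 := h.scale hr w g 1 hw hg (by linarith) one_pos
    rw [div_one, mul_one] at h2
    have h3 := Finset.sum_nonneg hnn
    have h4 := mul_nonneg (by positivity : (0:ℝ) ≤ 2 ^ q) h3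
    have h5 : g * Φ w ≤ 1 / 4 * Φ w := mul_le_mul_of_nonneg_right (by linarith) hw0
    linarith

theorem PhiOK.level_up (h : PhiOK Φ r q) (hr : 1 ≤ r) (w g c : ℝ) (hw : 0 ≤ w) (hg : 0 ≤ g)
    (hc : 0 < c) (n : ℕ) :
    ∑ j ∈ Finset.range n, (if c / 2 ^ j ≤ 2 * g then Φ (w * (c / 2 ^ j)) else 0) ≤
      2 ^ (q + 1) * Φ (w * g) := by
  rcases hg.eq_or_lt with rfl | hg0
  · have : ∀ j ∈ Finset.range n,
        (if c / 2 ^ j ≤ 2 * 0 then Φ (w * (c / 2 ^ j)) else 0) = 0 := by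
      intro j _
      rw [if_neg]
      have : 0 < c / 2 ^ j := by positivity
      linarith
    rw [Finset.sum_eq_zero this]
    simp [h.zero]
  · have h1 : ∀ j ∈ Finset.range n, (if c / 2 ^ j ≤ 2 * g then Φ (w * (c / 2 ^ j)) else 0) ≤
        (2 ^ q * Φ (w * g) / (2 * g)) * (if c / 2 ^ j ≤ 2 * g then c / 2 ^ j else 0) := by
      intro j _
      split_ifs with hj
      · have h2 := h.scale hr w (c / 2 ^ j) (2 * g) hw (by positivity) hj (by linarith)
        have h3 := h.up 2 (w * g) (by norm_num) (by positivity)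
        have e : 2 * (w * g) = w * (2 * g) := by ring
        rw [e] at h3
        refine h2.trans ((mul_le_mul_of_nonneg_left h3 (by positivity)).trans_eq ?_)
        ring
      · simp
    refine (Finset.sum_le_sum h1).trans ?_
    rw [← Finset.mul_sum]
    have h4 := (geo_sum n c (2 * g) hc.le (by linarith)).1
    have h5 := h.nonneg (w * g) (by positivity)
    refine (mul_le_mul_of_nonneg_left h4 (by positivity)).trans_eq ?_
    rw [pow_succ]
    field_simp

/-- Structural properties of the majorant. -/
structure PsiOK (Φ Ψ : ℝ → ℝ) (r : ℝ) (q : ℕ) (K a : ℝ) : Prop where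
  K1 : 1 ≤ K
  a1 : 1 ≤ a
  pos : ∀ t, 0 < t → 0 < Ψ t
  aInc : ∀ s t, 0 < s → s ≤ t → Ψ s * s ^ (-r) ≤ a * (Ψ t * t ^ (-r))
  up : ∀ y t, 1 ≤ y → 0 < t → Ψ (y * t) ≤ y ^ q * Ψ t
  dom : ∀ w s, 0 ≤ w → 0 < s → Φ (w * s) ≤ K * Ψ s * Φ w

theorem PsiOK.level {Ψ : ℝ → ℝ} {K a : ℝ} (hΨ : PsiOK Φ Ψ r q K a) (hr : 1 ≤ r) {N : ℕ}
    (hN : 1 ≤ N) (e : ℝ) (he : 0 < e) (heR : e ≤ AN q N ^ (1 / r)) :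
    Ψ (4 * e) * e ^ (-r) ≤ 4 ^ q * a * (2 ^ (q + 7)) ^ q * (Ψ ((N : ℝ) ^ (1 / r)) / N) := by
  have hN' : (1 : ℝ) ≤ N := by exact_mod_cast hN
  have hN0 : (0 : ℝ) < N := by linarith
  have hA : 0 < AN q N := by unfold AN; positivity
  have hc : (1 : ℝ) ≤ 2 ^ (q + 7) := one_le_pow₀ (by norm_num)
  have h1 := hΨ.up 4 e (by norm_num) he
  have h2 := hΨ.aInc e _ he heR
  have h3 : (AN q N ^ (1 / r)) ^ (-r) ≤ 1 / N := by
    rw [← Real.rpow_mul hA.le, mul_neg, one_div_mul_cancel (by linarith), Real.rpow_neg hA.le,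
      Real.rpow_one, one_div]
    apply inv_anti₀ hN0
    unfold AN
    nlinarith
  have h4 : Ψ (AN q N ^ (1 / r)) ≤ (2 ^ (q + 7)) ^ q * Ψ ((N : ℝ) ^ (1 / r)) := by
    have hp : (0 : ℝ) < (N : ℝ) ^ (1 / r) := Real.rpow_pos_of_pos hN0 _
    have e1 : AN q N ^ (1 / r) = ((2 : ℝ) ^ (q + 7)) ^ (1 / r) * (N : ℝ) ^ (1 / r) := by
      unfold AN
      rw [Real.mul_rpow (by positivity) hN0.le]
    have h5 : (1 : ℝ) ≤ ((2 : ℝ) ^ (q + 7)) ^ (1 / r) := Real.one_le_rpow hc (by positivity)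
    rw [e1]
    refine (hΨ.up _ _ h5 hp).trans (mul_le_mul_of_nonneg_right ?_ (hΨ.pos _ hp).le)
    refine pow_le_pow_left₀ (by linarith) ?_ q
    calc ((2 : ℝ) ^ (q + 7)) ^ (1 / r) ≤ ((2 : ℝ) ^ (q + 7)) ^ (1 : ℝ) :=
          Real.rpow_le_rpow_of_exponent_le hc ((div_le_one (by linarith)).2 hr)
      _ = _ := Real.rpow_one _
  have hp : (0 : ℝ) < (N : ℝ) ^ (1 / r) := Real.rpow_pos_of_pos hN0 _
  have hpp := hΨ.pos _ hp
  have ha := hΨ.a1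
  calc Ψ (4 * e) * e ^ (-r) ≤ 4 ^ q * Ψ e * e ^ (-r) :=
        mul_le_mul_of_nonneg_right h1 (Real.rpow_nonneg he.le _)
    _ = 4 ^ q * (Ψ e * e ^ (-r)) := by ring
    _ ≤ 4 ^ q * (a * (Ψ (AN q N ^ (1 / r)) * (AN q N ^ (1 / r)) ^ (-r))) := by gcongr
    _ ≤ 4 ^ q * (a * (((2 ^ (q + 7)) ^ q * Ψ ((N : ℝ) ^ (1 / r))) * (1 / N))) := by
        gcongr
    _ = _ := by ring

/-- The constant in the sample size. -/
noncomputable def CC (q : ℕ) (K a : ℝ) : ℝ :=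
  24 * 2 ^ (q + 2) * K * (4 ^ q * a * (2 ^ (q + 7)) ^ q)

theorem LPos.sample {ι : Type*} [Fintype ι] {μ : ι → ℝ} {d N : ℕ}
    {u : ι → EuclideanSpace ℝ (Fin d)} (h : LPos Φ r q μ d N u)
    {Ψ : ℝ → ℝ} {K a : ℝ} (hΨ : PsiOK Φ Ψ r q K a) (H : ℝ)
    (hnet : ∀ j : ℕ, 1 / 32 ≤ AN q N ^ (1 / r) / 2 ^ j → ∃ T,
      IsNet Φ μ u T (AN q N ^ (1 / r) / 2 ^ j) ∧
      (T.card : ℝ) ≤ Real.exp (H * (AN q N ^ (1 / r) / 2 ^ j) ^ (-r)))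
    (hH : AN q N * Real.log (64 * AN q N) ≤ H)
    (n : ℕ) (hn1 : 2 ^ n ≤ 16 * AN q N ^ (1 / r)) (hn2 : 16 * AN q N ^ (1 / r) < 2 ^ (n + 1))
    (m : ℕ) (hm : CC q K a * (n + 2) * H * (Ψ ((N : ℝ) ^ (1 / r)) / N) ≤ m) :
    ∃ x : Fin m → ι, ∀ v, ∑ i, μ i * Φ |inner ℝ v (u i)| = 1 →
      (m : ℝ) / (96 * 4 ^ q) ≤ ∑ j, Φ |inner ℝ v (u (x j))| := by
  classical
  have hA1 := h.AN1
  have hA : 0 < AN q N := by linarith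
  set R := AN q N ^ (1 / r) with hR
  have hRpos : 0 < R := by positivity
  have hRA : R ≤ AN q N := by
    calc AN q N ^ (1 / r) ≤ AN q N ^ (1 : ℝ) :=
          Real.rpow_le_rpow_of_exponent_le hA1 ((div_le_one (by linarith [h.r1])).2 h.r1)
      _ = _ := Real.rpow_one _
  have hepos : ∀ j : ℕ, 0 < R / 2 ^ j := fun j => by positivity
  have hsmall : ∀ j, j < n + 2 → 1 / 32 ≤ R / 2 ^ j := by
    intro j hj
    have h1 : (2 : ℝ) ^ j ≤ 2 ^ (n + 1) := pow_le_pow_right₀ (by norm_num) (by omega)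
    rw [div_le_div_iff₀ (by norm_num) (by positivity)]
    rw [pow_succ] at h1
    linarith
  have hnet' : ∀ j : ℕ, ∃ T, j < n + 2 → IsNet Φ μ u T (R / 2 ^ j) ∧
      (T.card : ℝ) ≤ Real.exp (H * (R / 2 ^ j) ^ (-r)) := by
    intro j
    by_cases hj : j < n + 2
    · obtain ⟨T, hT⟩ := hnet j (hsmall j hj)
      exact ⟨T, fun _ => hT⟩
    · exact ⟨∅, fun hc => absurd hc hj⟩
  choose Tn hTn using hnet'
  have hΦn := h.ok.nonneg
  set Z := ∑ i, μ i * Φ ‖u i‖ with hZ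
  have hZ0 : 0 ≤ Z := Finset.sum_nonneg fun i _ => h.νnn i
  have hZ2 : Z ≤ 2 := h.Z
  set τ : ι → ℝ := fun i => (μ i + μ i * Φ ‖u i‖) / (1 + Z) with hτ
  have hτpos : ∀ i, 0 < τ i := fun i =>
    div_pos (by linarith [h.μpos i, h.νnn i]) (by linarith)
  have hτ1 : ∑ i, τ i = 1 := by
    simp only [hτ]
    rw [← Finset.sum_div, Finset.sum_add_distrib, h.μsum, ← hZ, div_self (by linarith)]
  have hμτ : ∀ i, μ i ≤ 3 * τ i := by
    intro i
    have e : τ i * (1 + Z) = μ i + μ i * Φ ‖u i‖ := by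
      simp only [hτ]; field_simp
    have := h.νnn i
    have := hτpos i
    nlinarith
  have hντ : ∀ i, μ i * Φ ‖u i‖ ≤ 3 * τ i := by
    intro i
    have e : τ i * (1 + Z) = μ i + μ i * Φ ‖u i‖ := by
      simp only [hτ]; field_simp
    have := h.μpos i
    have := hτpos i
    nlinarith
  -- the sampled functions
  let q0 : (Σ _ : ℕ, EuclideanSpace ℝ (Fin d)) → ι → ℝ := fun s i =>
    if 3 * (R / 2 ^ s.1) ≤ |inner ℝ s.2 (nu u i)| then μ i * Φ (‖u i‖ * (4 * R / 2 ^ s.1)) else 0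
  let Y : (Σ _ : ℕ, EuclideanSpace ℝ (Fin d)) → ι → ℝ := fun s i => q0 s i / τ i
  let Q : (Σ _ : ℕ, EuclideanSpace ℝ (Fin d)) → ℝ := fun s => ∑ i, q0 s i
  let V : (Σ _ : ℕ, EuclideanSpace ℝ (Fin d)) → ℝ := fun s => 3 * K * Ψ (4 * (R / 2 ^ s.1))
  have hK0 : 0 < K := by linarith [hΨ.K1]
  have hq0 : ∀ s i, 0 ≤ q0 s i := by
    intro s i
    simp only [q0]
    split_ifs
    · exact mul_nonneg (h.μpos i).le (hΦn _ (by positivity))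
    · exact le_rfl
  have hVpos : ∀ s, 0 < V s := fun s => by
    have := hΨ.pos (4 * (R / 2 ^ s.1)) (by positivity)
    positivity
  have hYV : ∀ s i, Y s i ≤ V s := by
    intro s i
    simp only [Y]
    rw [div_le_iff₀ (hτpos i)]
    have hVp := hVpos s
    simp only [q0]
    split_ifs
    · have h1 := hΨ.dom ‖u i‖ (4 * (R / 2 ^ s.1)) (norm_nonneg _) (by positivity)
      have h2 := mul_le_mul_of_nonneg_left h1 (h.μpos i).le
      have h3 := hΨ.pos (4 * (R / 2 ^ s.1)) (by positivity)
      have h4 := mul_le_mul_of_nonneg_left (hντ i) (by positivity : 0 ≤ K * Ψ (4 * (R / 2 ^ s.1)))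
      rw [mul_div_assoc]
      simp only [V]
      linarith
    · exact mul_nonneg hVp.le (hτpos i).le
  set β : ℝ := 1 / 2 ^ (q + 2) with hβ
  have hβ0 : 0 < β := by positivity
  have hlev : (0 : ℝ) < (n : ℝ) + 2 := by positivity
  have hH0 : 0 ≤ H := by
    refine le_trans ?_ hH
    exact mul_nonneg hA.le (Real.log_nonneg (by linarith))
  let T : Finset (Σ _ : ℕ, EuclideanSpace ℝ (Fin d)) :=
    ((Finset.range (n + 2)).sigma Tn).filter fun s => β / (n + 2) ≤ Q s
  have hexp : ∀ s ∈ T, Real.exp (-(m * Q s / (4 * V s))) ≤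
      Real.exp (-(2 * (H * (R / 2 ^ s.1) ^ (-r)))) := by
    intro s hs
    have hsQ : β / (n + 2) ≤ Q s := (Finset.mem_filter.1 hs).2
    apply Real.exp_le_exp.2
    apply neg_le_neg
    rw [le_div_iff₀ (by linarith [hVpos s])]
    have h1 := hΨ.level h.r1 h.N1 (R / 2 ^ s.1) (hepos _)
      (div_le_self hRpos.le (one_le_pow₀ (by norm_num)))
    calc 2 * (H * (R / 2 ^ s.1) ^ (-r)) * (4 * V s)
        = 24 * K * H * (Ψ (4 * (R / 2 ^ s.1)) * (R / 2 ^ s.1) ^ (-r)) := by simp only [V]; ring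
      _ ≤ 24 * K * H * (4 ^ q * a * (2 ^ (q + 7)) ^ q * (Ψ ((N : ℝ) ^ (1 / r)) / N)) :=
          mul_le_mul_of_nonneg_left h1 (by positivity)
      _ = (CC q K a * (n + 2) * H * (Ψ ((N : ℝ) ^ (1 / r)) / N)) * (β / (n + 2)) := by
          simp only [CC, hβ]
          field_simp
      _ ≤ m * (β / (n + 2)) := mul_le_mul_of_nonneg_right hm (by positivity)
      _ ≤ m * Q s := mul_le_mul_of_nonneg_left hsQ (by positivity)
  have hsum : ∑ s ∈ T, Real.exp (-(m * Q s / (4 * V s))) < 1 := by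
    calc ∑ s ∈ T, Real.exp (-(m * Q s / (4 * V s)))
        ≤ ∑ s ∈ T, Real.exp (-(2 * (H * (R / 2 ^ s.1) ^ (-r)))) := Finset.sum_le_sum hexp
      _ ≤ ∑ s ∈ (Finset.range (n + 2)).sigma Tn, Real.exp (-(2 * (H * (R / 2 ^ s.1) ^ (-r)))) :=
          Finset.sum_le_sum_of_subset_of_nonneg (Finset.filter_subset _ _)
            fun _ _ _ => (Real.exp_pos _).le
      _ = ∑ j ∈ Finset.range (n + 2), ∑ _v ∈ Tn j,
            Real.exp (-(2 * (H * (R / 2 ^ j) ^ (-r)))) := Finset.sum_sigma _ _ _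
      _ ≤ ∑ j ∈ Finset.range (n + 2), 1 / (64 * AN q N) := by
          refine Finset.sum_le_sum fun j hj => ?_
          rw [Finset.sum_const, nsmul_eq_mul]
          have h1 := (hTn j (Finset.mem_range.1 hj)).2
          calc ((Tn j).card : ℝ) * Real.exp (-(2 * (H * (R / 2 ^ j) ^ (-r))))
              ≤ Real.exp (H * (R / 2 ^ j) ^ (-r)) * Real.exp (-(2 * (H * (R / 2 ^ j) ^ (-r)))) :=
                mul_le_mul_of_nonneg_right h1 (Real.exp_pos _).le
            _ = Real.exp (-(H * (R / 2 ^ j) ^ (-r))) := by rw [← Real.exp_add]; ring_nf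
            _ ≤ Real.exp (-Real.log (64 * AN q N)) := by
                apply Real.exp_le_exp.2
                apply neg_le_neg
                have h2 := h.scale_rpow j
                have h3 : 0 ≤ (R / 2 ^ j) ^ (-r) := Real.rpow_nonneg (hepos j).le _
                have h4 := mul_le_mul_of_nonneg_right hH h3
                have h5 : 0 ≤ Real.log (64 * AN q N) := Real.log_nonneg (by linarith)
                have h6 := mul_le_mul_of_nonneg_left h2 h5
                rw [← hR] at h6
                linarith
            _ = _ := by rw [Real.exp_neg, Real.exp_log (by linarith), one_div]
      _ = (n + 2) * (1 / (64 * AN q N)) := by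
          rw [Finset.sum_const, nsmul_eq_mul, Finset.card_range]; push_cast; ring
      _ < 1 := by
          rw [mul_one_div, div_lt_one (by linarith)]
          have h1 : ((n + 2 : ℕ) : ℝ) ≤ 2 * 2 ^ n := by
            have : n + 2 ≤ 2 * 2 ^ n := by
              have h2 : n + 1 ≤ 2 ^ n := Nat.lt_two_pow_self
              have h3 : 1 ≤ 2 ^ n := Nat.one_le_two_pow
              omega
            exact_mod_cast this
          push_cast at h1
          linarith
  obtain ⟨x, hx⟩ := exists_good_sample τ (fun i => (hτpos i).le) hτ1 T Y V Q
    (fun s _ i => div_nonneg (hq0 s i) (hτpos i).le) (fun s _ i => hYV s i) (fun s _ => hVpos s)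
    (fun s _ => by
      refine le_of_eq (Finset.sum_congr rfl fun i _ => ?_)
      simp only [Y]
      have := (hτpos i).ne'
      field_simp) m hsum
  refine ⟨x, fun v hv => ?_⟩
  have hvS : v ∈ ModSet Φ μ u := hv.le
  have hvR := h.snorm hvS
  rw [← hR] at hvR
  -- level functionals
  let P : ℕ → ℝ := fun j => ∑ i,
    if 4 * R / 2 ^ j ≤ |inner ℝ v (nu u i)| then μ i * Φ (‖u i‖ * (4 * R / 2 ^ j)) else 0
  have hPsum : 2 * β ≤ ∑ j ∈ Finset.range (n + 2), P j := by
    have h1 : ∀ i ∈ Finset.univ, μ i * Φ |inner ℝ v (u i)| ≤ 1 / 4 * (μ i * Φ ‖u i‖) +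
        2 ^ q * ∑ j ∈ Finset.range (n + 2), (if 4 * R / 2 ^ j ≤ |inner ℝ v (nu u i)| then
          μ i * Φ (‖u i‖ * (4 * R / 2 ^ j)) else 0) := by
      intro i _
      rw [nu_inner_abs]
      have h2 := h.ok.level_low h.r1 ‖u i‖ |inner ℝ v (nu u i)| (4 * R) (norm_nonneg _)
        (abs_nonneg _) (by positivity) (by have := nu_inner_le u i v; linarith) n (by
          rw [div_le_iff₀ (by positivity)]; linarith)
      have h3 := mul_le_mul_of_nonneg_left h2 (h.μpos i).le
      refine h3.trans_eq ?_
      rw [mul_add, ← mul_assoc, mul_comm (μ i) (1 / 4), mul_assoc]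
      congr 1
      rw [mul_left_comm, Finset.mul_sum]
      congr 1
      refine Finset.sum_congr rfl fun j _ => ?_
      rw [mul_ite, mul_zero]
    have h4 := Finset.sum_le_sum h1
    rw [hv, Finset.sum_add_distrib, ← Finset.mul_sum, ← Finset.mul_sum, Finset.sum_comm, ← hZ] at h4
    have h5 : 1 / 2 ≤ 2 ^ q * ∑ j ∈ Finset.range (n + 2), P j := by
      simp only [P]; linarith
    have e : 2 * β * 2 ^ q = 1 / 2 := by
      rw [hβ, pow_add]; field_simp
    have h6 : (0 : ℝ) < 2 ^ q := by positivity
    by_contra hcon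
    push Not at hcon
    have := mul_lt_mul_of_pos_left hcon h6
    linarith
  have hker : ∀ j : ℕ, ∃ w, j < n + 2 → w ∈ Tn j ∧
      ∀ i, |inner ℝ (v - w) (nu u i)| ≤ R / 2 ^ j := by
    intro j
    by_cases hj : j < n + 2
    · obtain ⟨w, hw, hvw⟩ := (hTn j hj).1.2 v hvS
      exact ⟨w, fun _ => ⟨hw, hvw⟩⟩
    · exact ⟨0, fun hc => absurd hc hj⟩
  choose W hW using hker
  have htri : ∀ j, j < n + 2 → ∀ i,
      |(inner ℝ v (nu u i) : ℝ) - inner ℝ (W j) (nu u i)| ≤ R / 2 ^ j := by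
    intro j hj i
    have := (hW j hj).2 i
    rwa [inner_sub_left] at this
  have hPQ : ∀ j, j < n + 2 → P j ≤ Q ⟨j, W j⟩ := by
    intro j hj
    refine Finset.sum_le_sum fun i _ => ?_
    by_cases hc : 4 * R / 2 ^ j ≤ |inner ℝ v (nu u i)|
    · rw [if_pos hc]
      simp only [q0]
      rw [if_pos]
      have h1 := htri j hj i
      have h2 := abs_sub_abs_le_abs_sub (inner ℝ v (nu u i) : ℝ) (inner ℝ (W j) (nu u i))
      rw [mul_div_assoc] at hc
      linarith
    · rw [if_neg hc]; exact hq0 _ _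
  have hlow : ∀ j ∈ Finset.range (n + 2),
      m / 4 * (P j - β / (n + 2)) ≤ ∑ k, Y ⟨j, W j⟩ (x k) := by
    intro j hj
    have hj' := Finset.mem_range.1 hj
    have hm0 : (0 : ℝ) ≤ m / 4 := by positivity
    by_cases hc : β / (n + 2) ≤ P j
    · have h1 := hx ⟨j, W j⟩ (Finset.mem_filter.2
        ⟨Finset.mem_sigma.2 ⟨hj, (hW j hj').1⟩, hc.trans (hPQ j hj')⟩)
      refine le_trans ?_ h1
      have : 0 < β / (n + 2) := by positivity
      have h2 := mul_le_mul_of_nonneg_left (hPQ j hj') hm0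
      have h3 := mul_nonneg hm0 this.le
      linarith
    · push Not at hc
      refine le_trans (mul_nonpos_of_nonneg_of_nonpos hm0 (by linarith)) ?_
      exact Finset.sum_nonneg fun k _ => div_nonneg (hq0 _ _) (hτpos _).le
  clear_value P
  have hlow2 := Finset.sum_le_sum hlow
  rw [← Finset.mul_sum, Finset.sum_sub_distrib, Finset.sum_const, Finset.card_range, nsmul_eq_mul,
    Finset.sum_comm] at hlow2
  have e1 : ((n + 2 : ℕ) : ℝ) * (β / (n + 2)) = β := by push_cast; field_simp
  rw [e1] at hlow2
  have hup : ∀ k ∈ (Finset.univ : Finset (Fin m)), ∑ j ∈ Finset.range (n + 2), Y ⟨j, W j⟩ (x k) ≤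
      3 * 2 ^ (q + 1) * Φ |inner ℝ v (u (x k))| := by
    intro k _
    set i := x k
    have h1 := h.ok.level_up h.r1 ‖u i‖ |inner ℝ v (nu u i)| (4 * R) (norm_nonneg _)
        (abs_nonneg _) (by positivity) (n + 2)
    rw [← nu_inner_abs] at h1
    have h2 : ∀ j ∈ Finset.range (n + 2), Y ⟨j, W j⟩ i ≤
        μ i / τ i * (if 4 * R / 2 ^ j ≤ 2 * |inner ℝ v (nu u i)| then
          Φ (‖u i‖ * (4 * R / 2 ^ j)) else 0) := by
      intro j hj
      simp only [Y, q0]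
      have hμτ0 : 0 ≤ μ i / τ i := div_nonneg (h.μpos i).le (hτpos i).le
      have hΦ0 : 0 ≤ Φ (‖u i‖ * (4 * R / 2 ^ j)) := hΦn _ (by positivity)
      by_cases hc : 3 * (R / 2 ^ j) ≤ |inner ℝ (W j) (nu u i)|
      · rw [if_pos hc, if_pos]
        · exact le_of_eq (by ring)
        · have h3 := htri j (Finset.mem_range.1 hj) i
          have h4 := abs_sub_abs_le_abs_sub (inner ℝ (W j) (nu u i) : ℝ) (inner ℝ v (nu u i))
          rw [abs_sub_comm] at h4
          rw [mul_div_assoc]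
          linarith
      · rw [if_neg hc, zero_div]
        split_ifs
        · exact mul_nonneg hμτ0 hΦ0
        · simp
    refine (Finset.sum_le_sum h2).trans ?_
    rw [← Finset.mul_sum]
    have h5 : μ i / τ i ≤ 3 := (div_le_iff₀ (hτpos i)).2 (hμτ i)
    have h6 : 0 ≤ 2 ^ (q + 1) * Φ |inner ℝ v (u i)| := by
      have := hΦn |inner ℝ v (u i)| (abs_nonneg _)
      positivity
    calc _ ≤ μ i / τ i * (2 ^ (q + 1) * Φ |inner ℝ v (u i)|) :=
          mul_le_mul_of_nonneg_left h1 (div_nonneg (h.μpos i).le (hτpos i).le)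
      _ ≤ 3 * (2 ^ (q + 1) * Φ |inner ℝ v (u i)|) := mul_le_mul_of_nonneg_right h5 h6
      _ = _ := by ring
  have hfin := hlow2.trans (Finset.sum_le_sum hup)
  rw [← Finset.mul_sum] at hfin
  have h7 : m / 4 * β ≤ 3 * 2 ^ (q + 1) * ∑ k, Φ |inner ℝ v (u (x k))| := by
    refine le_trans ?_ hfin
    exact mul_le_mul_of_nonneg_left (by linarith) (by positivity)
  have e2 : (4 : ℝ) ^ q = 2 ^ q * 2 ^ q := by rw [← mul_pow]; norm_num
  rw [div_le_iff₀ (by positivity)]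
  have e3 : m / 4 * β * (4 * 2 ^ (q + 2)) = m := by rw [hβ]; field_simp
  have h8 := mul_le_mul_of_nonneg_right h7 (by positivity : (0 : ℝ) ≤ 4 * 2 ^ (q + 2))
  rw [e3] at h8
  refine h8.trans_eq ?_
  rw [e2, pow_succ, pow_add]
  ring

end


section
variable {Φ : ℝ → ℝ} {r : ℝ} {q : ℕ}

theorem exists_pos (hΦ : PhiOK Φ r q) (hr1 : 1 ≤ r) (hr2 : r ≤ 2) {ι : Type*} [Fintype ι]
    [Nonempty ι] (μ : ι → ℝ) (hμ : ∀ i, 0 < μ i) (hμ1 : ∑ i, μ i = 1) (N : ℕ) (hN : 1 ≤ N)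
    (Y : Submodule ℝ (ι → ℝ)) (hd : 1 ≤ Module.finrank ℝ Y) (hdN : Module.finrank ℝ Y ≤ N) :
    ∃ u : ι → EuclideanSpace ℝ (Fin (Module.finrank ℝ Y)),
      LPos Φ r q μ (Module.finrank ℝ Y) N u ∧ ∀ f ∈ Y, ∃ v, ∀ i, f i = inner ℝ v (u i) := by
  classical
  set d := Module.finrank ℝ Y
  let b := Module.finBasis ℝ Y
  let u₀ : ι → EuclideanSpace ℝ (Fin d) := fun i => WithLp.toLp 2 fun k => (b k : ι → ℝ) i
  have hin : ∀ (c : EuclideanSpace ℝ (Fin d)) i, inner ℝ c (u₀ i) =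
      ((∑ k, c k • b k : Y) : ι → ℝ) i := by
    intro c i
    simp only [u₀, PiLp.inner_apply, Submodule.coe_sum, Submodule.coe_smul, Finset.sum_apply,
      Pi.smul_apply, smul_eq_mul]
    exact Finset.sum_congr rfl fun k _ => by simp [mul_comm]
  have hnd : ∀ v : EuclideanSpace ℝ (Fin d), (∀ i, inner ℝ v (u₀ i) = 0) → v = 0 := by
    intro v hv
    have h1 : (∑ k, v k • b k : Y) = 0 := by
      ext i
      rw [← hin]
      simpa using hv i
    have h2 := Fintype.linearIndependent_iff.1 b.linearIndependent (fun k => v k) h1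
    ext k
    simpa using h2 k
  obtain ⟨u, hu1, hu2, hu3⟩ := lewis hΦ hr1 μ hμ hd u₀ hnd
  refine ⟨u, ⟨hΦ, hr1, hr2, hN, hdN, hμ, hμ1, hu2, fun v => ?_⟩, ?_⟩
  · refine (hu3 v).trans_eq ?_
    congr 1
    refine Finset.sum_congr rfl fun i _ => ?_
    rw [nu, inner_smul_right, div_eq_inv_mul]
  · intro f hf
    obtain ⟨v, hv⟩ := hu1 (WithLp.toLp 2 fun k => b.repr ⟨f, hf⟩ k)
    refine ⟨v, fun i => ?_⟩
    rw [← hv i, hin]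
    have := b.sum_repr ⟨f, hf⟩
    simp only
    rw [this]

theorem core_gen (hΦ : PhiOK Φ r q) (hr1 : 1 ≤ r) (hr2 : r ≤ 2) {Ψ : ℝ → ℝ} {K a : ℝ}
    (hΨ : PsiOK Φ Ψ r q K a) {ι : Type*} [Fintype ι]
    [Nonempty ι] (μ : ι → ℝ) (hμ : ∀ i, 0 < μ i) (hμ1 : ∑ i, μ i = 1) (N : ℕ) (hN : 1 ≤ N)
    (Y : Submodule ℝ (ι → ℝ)) (hdN : Module.finrank ℝ Y ≤ N) (H : ℝ)
    (hnet : ∀ (d : ℕ) (u : ι → EuclideanSpace ℝ (Fin d)), LPos Φ r q μ d N u →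
      ∀ j : ℕ, 1 / 32 ≤ AN q N ^ (1 / r) / 2 ^ j → ∃ T,
      IsNet Φ μ u T (AN q N ^ (1 / r) / 2 ^ j) ∧
      (T.card : ℝ) ≤ Real.exp (H * (AN q N ^ (1 / r) / 2 ^ j) ^ (-r)))
    (hH : AN q N * Real.log (64 * AN q N) ≤ H) (n : ℕ)
    (hn1 : 2 ^ n ≤ 16 * AN q N ^ (1 / r)) (hn2 : 16 * AN q N ^ (1 / r) < 2 ^ (n + 1))
    (m : ℕ) (hm : CC q K a * (n + 2) * H * (Ψ ((N : ℝ) ^ (1 / r)) / N) ≤ m) :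
    ∃ x : Fin m → ι, ∀ f ∈ Y, 1 ≤ ∑ i, μ i * Φ |f i| →
      (m : ℝ) ≤ ∑ j, Φ ((96 * 4 ^ q) * |f (x j)|) := by
  rcases Nat.eq_zero_or_pos (Module.finrank ℝ Y) with h0 | hd
  · refine ⟨fun _ => Classical.arbitrary ι, fun f hf h1 => ?_⟩
    have : Y = ⊥ := Submodule.finrank_eq_zero.1 h0
    rw [this, Submodule.mem_bot] at hf
    subst hf
    simp [hΦ.zero] at h1
    linarith
  obtain ⟨u, hu, hrep⟩ := exists_pos hΦ hr1 hr2 μ hμ hμ1 N hN Y hd hdN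
  obtain ⟨x, hx⟩ := hu.sample hΨ H (hnet _ u hu) hH n hn1 hn2 m hm
  refine ⟨x, fun f hf h1 => ?_⟩
  have hcont : Continuous fun t : ℝ => ∑ i, μ i * Φ |t * f i| := by
    refine continuous_finsetSum _ fun i _ => continuous_const.mul ?_
    exact hΦ.cont.comp (by fun_prop : Continuous fun t : ℝ => t * f i)
  obtain ⟨t, ⟨ht0, ht1⟩, ht⟩ := intermediate_value_Icc (zero_le_one' ℝ) hcont.continuousOn
    (show (1 : ℝ) ∈ Set.Icc _ _ by simp [hΦ.zero, h1])
  obtain ⟨v, hv⟩ := hrep (t • f) (Y.smul_mem t hf)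
  have hv' : ∀ i, inner ℝ v (u i) = t * f i := fun i => (hv i).symm
  have h2 := hx v (by simp only [hv']; exact ht)
  have hκ : (1 : ℝ) ≤ 96 * 4 ^ q := by
    have : (1 : ℝ) ≤ 4 ^ q := one_le_pow₀ (by norm_num)
    linarith
  rw [div_le_iff₀ (by linarith), Finset.sum_mul] at h2
  refine h2.trans (Finset.sum_le_sum fun j _ => ?_)
  rw [hv', mul_comm]
  refine le_trans (mul_le_mul_of_nonneg_left ?_ (by linarith))
    (hΦ.low1 hr1 _ _ hκ (abs_nonneg _))
  refine hΦ.mono _ _ (abs_nonneg _) ?_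
  rw [abs_mul, abs_of_nonneg ht0]
  exact mul_le_of_le_one_left (abs_nonneg _) ht1

/-- Polynomial size in the crude step. -/
noncomputable def m1 (q N : ℕ) (K a P : ℝ) : ℕ := ⌈CC q K a * 528384 * P * AN q N ^ (q + 5)⌉₊ + 1

theorem AN_one (q N : ℕ) (hN : 1 ≤ N) : 1 ≤ AN q N := by
  have h1 : (1 : ℝ) ≤ N := by exact_mod_cast hN
  have h2 : (1 : ℝ) ≤ 2 ^ (q + 7) := one_le_pow₀ (by norm_num)
  unfold AN; nlinarith

theorem AN_R (q N : ℕ) (hN : 1 ≤ N) (hr1 : 1 ≤ r) :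
    1 ≤ AN q N ^ (1 / r) ∧ AN q N ^ (1 / r) ≤ AN q N := by
  have hA1 := AN_one q N hN
  constructor
  · exact Real.one_le_rpow hA1 (by positivity)
  · calc AN q N ^ (1 / r) ≤ AN q N ^ (1 : ℝ) :=
          Real.rpow_le_rpow_of_exponent_le hA1 ((div_le_one (by linarith)).2 hr1)
      _ = _ := Real.rpow_one _

theorem CC_pos {Ψ : ℝ → ℝ} {K a : ℝ} (hΨ : PsiOK Φ Ψ r q K a) : 0 < CC q K a := by
  have := hΨ.K1
  have := hΨ.a1
  unfold CC
  positivity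

theorem core_crude (hΦ : PhiOK Φ r q) (hr1 : 1 ≤ r) (hr2 : r ≤ 2) {Ψ : ℝ → ℝ} {K a : ℝ}
    (hΨ : PsiOK Φ Ψ r q K a) {ι : Type*} [Fintype ι]
    [Nonempty ι] (μ : ι → ℝ) (hμ : ∀ i, 0 < μ i) (hμ1 : ∑ i, μ i = 1) (N : ℕ) (hN : 1 ≤ N)
    (Y : Submodule ℝ (ι → ℝ)) (hdN : Module.finrank ℝ Y ≤ N) :
    ∃ x : Fin (m1 q N K a (Ψ 1)) → ι, ∀ f ∈ Y, 1 ≤ ∑ i, μ i * Φ |f i| →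
      (m1 q N K a (Ψ 1) : ℝ) ≤ ∑ j, Φ ((96 * 4 ^ q) * |f (x j)|) := by
  have hA1 := AN_one q N hN
  obtain ⟨hR1, hR2⟩ := AN_R (r := r) q N hN hr1
  have hN' : (1 : ℝ) ≤ N := by exact_mod_cast hN
  have hNA : (N : ℝ) ≤ AN q N := by
    unfold AN
    have : (1 : ℝ) ≤ 2 ^ (q + 7) := one_le_pow₀ (by norm_num)
    nlinarith
  obtain ⟨n, hn1, hn2⟩ := exists_nat_pow_near (by linarith : 1 ≤ 16 * AN q N ^ (1 / r))
    (one_lt_two : (1 : ℝ) < 2)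
  have hlog0 : 0 ≤ Real.log (64 * AN q N) := Real.log_nonneg (by linarith)
  have hlog4 : 0 ≤ Real.log (4 * N) := Real.log_nonneg (by linarith)
  have hlog : Real.log (64 * AN q N) ≤ 64 * AN q N := by
    have := Real.log_le_sub_one_of_pos (by linarith : 0 < 64 * AN q N)
    linarith
  have hlog2 : Real.log (4 * N) ≤ Real.log (64 * AN q N) :=
    Real.log_le_log (by linarith) (by linarith)
  refine core_gen hΦ hr1 hr2 hΨ μ hμ hμ1 N hN Y hdN (129 * Real.log (64 * AN q N) * AN q N ^ 3)
    ?_ ?_ n hn1 hn2 _ ?_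
  · intro d u hu j hj
    obtain ⟨T, hT, hc⟩ := hu.crude_net j hj
    refine ⟨T, hT, hc.trans (Real.exp_le_exp.2 ?_)⟩
    have := Real.rpow_nonneg (hu.scale_pos j).le (-r)
    gcongr
  · have h1 : AN q N ≤ AN q N ^ 3 := le_self_pow₀ hA1 (by norm_num)
    have h2 := mul_le_mul_of_nonneg_right h1 hlog0
    have h3 : 0 ≤ AN q N ^ 3 * Real.log (64 * AN q N) := by positivity
    linarith
  · have hP := hΨ.pos 1 one_pos
    have hRN : (1 : ℝ) ≤ (N : ℝ) ^ (1 / r) := Real.one_le_rpow hN' (by positivity)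
    have hRN2 : (N : ℝ) ^ (1 / r) ≤ N := by
      calc (N : ℝ) ^ (1 / r) ≤ (N : ℝ) ^ (1 : ℝ) :=
          Real.rpow_le_rpow_of_exponent_le hN' ((div_le_one (by linarith)).2 hr1)
        _ = _ := Real.rpow_one _
    have h1 : Ψ ((N : ℝ) ^ (1 / r)) / N ≤ AN q N ^ q * Ψ 1 := by
      have h2 := hΨ.up _ 1 hRN one_pos
      rw [mul_one] at h2
      have h3 : ((N : ℝ) ^ (1 / r)) ^ q ≤ AN q N ^ q :=
        pow_le_pow_left₀ (by linarith) (by linarith) q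
      have h4 := mul_le_mul_of_nonneg_right h3 hP.le
      have h5 : Ψ ((N : ℝ) ^ (1 / r)) / N ≤ Ψ ((N : ℝ) ^ (1 / r)) :=
        div_le_self (hΨ.pos _ (by linarith)).le hN'
      linarith
    have hlev : (n : ℝ) + 2 ≤ 32 * AN q N := by
      have h1 : ((n + 2 : ℕ) : ℝ) ≤ 2 * 2 ^ n := by
        have : n + 2 ≤ 2 * 2 ^ n := by
          have h2 : n + 1 ≤ 2 ^ n := Nat.lt_two_pow_self
          have h3 : 1 ≤ 2 ^ n := Nat.one_le_two_pow
          omega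
        exact_mod_cast this
      push_cast at h1
      linarith
    have hC := CC_pos hΨ
    have hb : (0:ℝ) ≤ Ψ ((N : ℝ) ^ (1 / r)) / N :=
      div_nonneg (hΨ.pos _ (by linarith)).le (by linarith)
    calc CC q K a * (n + 2) * (129 * Real.log (64 * AN q N) * AN q N ^ 3) *
          (Ψ ((N : ℝ) ^ (1 / r)) / N)
        ≤ CC q K a * (32 * AN q N) * (129 * (64 * AN q N) * AN q N ^ 3) *
          (AN q N ^ q * Ψ 1) := by gcongr
      _ = CC q K a * 264192 * Ψ 1 * AN q N ^ (q + 5) := by ring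
      _ ≤ CC q K a * 528384 * Ψ 1 * AN q N ^ (q + 5) := by gcongr; norm_num
      _ ≤ m1 q N K a (Ψ 1) := by
          unfold m1
          push_cast
          linarith [Nat.le_ceil (CC q K a * 528384 * Ψ 1 * AN q N ^ (q + 5))]

set_option maxHeartbeats 1000000 in
theorem core_fine (hΦ : PhiOK Φ r q) (hr1 : 1 ≤ r) (hr2 : r ≤ 2) {Ψ : ℝ → ℝ} {K a : ℝ}
    (hΨ : PsiOK Φ Ψ r q K a) : ∃ c : ℝ, 0 < c ∧ ∀ (N : ℕ), 1 ≤ N →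
    ∃ m : ℕ, 0 < m ∧ (m : ℝ) ≤ c * Ψ ((N : ℝ) ^ (1 / r)) * Real.logb 2 (2 * N) ^ 3 ∧
    ∀ Y : Submodule ℝ (Fin (m1 q N K a (Ψ 1)) → ℝ), Module.finrank ℝ Y ≤ N →
    ∃ x : Fin m → Fin (m1 q N K a (Ψ 1)), ∀ f ∈ Y,
      (m1 q N K a (Ψ 1) : ℝ) ≤ ∑ i, Φ |f i| →
      (m : ℝ) ≤ ∑ j, Φ ((96 * 4 ^ q) * |f (x j)|) := by
  have hP := hΨ.pos 1 one_pos
  have hC := CC_pos hΨ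
  have ha := hΨ.a1
  obtain ⟨C2, hC2⟩ : ∃ C2 : ℝ, C2 = 64 * (CC q K a * 528384 * Ψ 1 + 2) := ⟨_, rfl⟩
  have hC21 : 1 ≤ C2 := by
    have : 0 < CC q K a * 528384 * Ψ 1 := by positivity
    linarith
  obtain ⟨C3, hC3⟩ : ∃ C3 : ℝ, C3 = Real.log C2 + (q + 6) * (q + 8) := ⟨_, rfl⟩
  have hC30 : 0 < C3 := by
    have := Real.log_nonneg hC21
    rw [hC3]; positivity
  obtain ⟨C4, hC4⟩ : ∃ C4 : ℝ, C4 = CC q K a * (q + 13) * (17 * C3 * 2 ^ (q + 7)) := ⟨_, rfl⟩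
  have hC40 : 0 < C4 := by rw [hC4]; positivity
  refine ⟨C4 + 2 * a / Ψ 1, by positivity, fun N hN => ?_⟩
  have hA1 := AN_one q N hN
  obtain ⟨hR1, hR2⟩ := AN_R (r := r) q N hN hr1
  have hN' : (1 : ℝ) ≤ N := by exact_mod_cast hN
  obtain ⟨n, hn1, hn2⟩ := exists_nat_pow_near (by linarith : 1 ≤ 16 * AN q N ^ (1 / r))
    (one_lt_two : (1 : ℝ) < 2)
  obtain ⟨l, hl⟩ : ∃ l : ℝ, l = Real.logb 2 (2 * N) := ⟨_, rfl⟩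
  have hl2 : l = 1 + Real.logb 2 N := by
    rw [hl, Real.logb_mul (by norm_num) (by linarith), Real.logb_self_eq_one (by norm_num)]
  have hl1 : 1 ≤ l := by
    have := Real.logb_nonneg one_lt_two hN'
    linarith
  set M := m1 q N K a (Ψ 1) with hM
  have hM1 : (1 : ℝ) ≤ M := by
    have : 1 ≤ M := by rw [hM]; unfold m1; omega
    exact_mod_cast this
  have hMup : (M : ℝ) ≤ (CC q K a * 528384 * Ψ 1 + 2) * AN q N ^ (q + 5) := by
    rw [hM]
    unfold m1
    push_cast
    have h1 := Nat.ceil_lt_add_one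
      (by positivity : 0 ≤ CC q K a * 528384 * Ψ 1 * AN q N ^ (q + 5))
    have h2 : 1 ≤ AN q N ^ (q + 5) := one_le_pow₀ hA1
    linarith
  have hlogM : Real.log (64 * AN q N * M) ≤ C3 * l := by
    have h1 : 64 * AN q N * M ≤ C2 * AN q N ^ (q + 6) := by
      have := mul_le_mul_of_nonneg_left hMup (by linarith : 0 ≤ 64 * AN q N)
      refine this.trans_eq ?_
      rw [hC2]; ring
    have h2 := Real.log_le_log (by positivity) h1
    rw [Real.log_mul (x := C2) (y := AN q N ^ (q + 6)) (by linarith) (by positivity), Real.log_pow] at h2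
    have h3 : Real.log (AN q N) ≤ (q + 8) * l := by
      unfold AN
      rw [Real.log_mul (by positivity) (by linarith), Real.log_pow]
      have h4 : Real.log 2 ≤ 1 := by linarith [Real.log_two_lt_d9]
      have h5 : Real.log N ≤ l := by
        have h7 : Real.log N = Real.logb 2 N * Real.log 2 := by
          rw [Real.logb, div_mul_cancel₀]; exact (Real.log_pos one_lt_two).ne'
        have h8 := Real.logb_nonneg one_lt_two hN'
        rw [h7]
        nlinarith
      have h6 : ((q + 7 : ℕ) : ℝ) * Real.log 2 ≤ (q + 7) * l := by
        push_cast
        exact mul_le_mul_of_nonneg_left (by linarith) (by positivity)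
      linarith
    have h4 : ((q + 6 : ℕ) : ℝ) * Real.log (AN q N) ≤ (q + 6) * ((q + 8) * l) := by
      push_cast
      exact mul_le_mul_of_nonneg_left h3 (by positivity)
    have h5 : Real.log C2 ≤ Real.log C2 * l := le_mul_of_one_le_right (Real.log_nonneg hC21) hl1
    rw [hC3]
    linarith
  have hlev : (n : ℝ) + 2 ≤ (q + 13) * l := by
    have h1 : (2 : ℝ) ^ n ≤ 2 ^ (q + 11) * N := by
      refine hn1.trans ?_
      have : 16 * AN q N = 2 ^ (q + 11) * N := by unfold AN; rw [pow_add, pow_add]; ring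
      linarith
    have h2 := Real.logb_le_logb_of_le one_lt_two (by positivity) h1
    rw [Real.logb_mul (by positivity) (by linarith), Real.logb_pow, Real.logb_pow,
      Real.logb_self_eq_one (by norm_num)] at h2
    push_cast at h2
    have hq : (0 : ℝ) ≤ q := by positivity
    nlinarith
  obtain ⟨H, hH⟩ : ∃ H : ℝ, H = 17 * Real.log (64 * AN q N * M) * AN q N := ⟨_, rfl⟩
  have hlog0 : 0 ≤ Real.log (64 * AN q N * M) := Real.log_nonneg (by nlinarith)
  have hH0 : 0 ≤ H := by rw [hH]; positivity
  have hRN : (1 : ℝ) ≤ (N : ℝ) ^ (1 / r) := Real.one_le_rpow hN' (by positivity)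
  have hΨN := hΨ.pos ((N : ℝ) ^ (1 / r)) (by linarith)
  set x0 := CC q K a * (n + 2) * H * (Ψ ((N : ℝ) ^ (1 / r)) / N) with hx0
  have hx00 : 0 ≤ x0 := by positivity
  refine ⟨⌈x0⌉₊ + 1, by omega, ?_, ?_⟩
  · push_cast
    rw [← hl]
    have h1 := Nat.ceil_lt_add_one hx00
    have h2 : x0 ≤ C4 * Ψ ((N : ℝ) ^ (1 / r)) * l ^ 3 := by
      calc x0 ≤ CC q K a * ((q + 13) * l) * (17 * (C3 * l) * AN q N) *
            (Ψ ((N : ℝ) ^ (1 / r)) / N) := by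
            rw [hx0, hH]
            gcongr
        _ = C4 * Ψ ((N : ℝ) ^ (1 / r)) * l ^ 2 := by
            rw [hC4]; unfold AN; field_simp
        _ ≤ C4 * Ψ ((N : ℝ) ^ (1 / r)) * l ^ 3 := by
            gcongr
            norm_num
    have h3 : 2 ≤ 2 * a / Ψ 1 * Ψ ((N : ℝ) ^ (1 / r)) * l ^ 3 := by
      have h4 := hΨ.aInc 1 _ one_pos hRN
      rw [Real.one_rpow, mul_one] at h4
      have h5 : ((N : ℝ) ^ (1 / r)) ^ (-r) ≤ 1 :=
        Real.rpow_le_one_of_one_le_of_nonpos hRN (by linarith)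
      have h6 : Ψ 1 ≤ a * Ψ ((N : ℝ) ^ (1 / r)) := by
        refine h4.trans (mul_le_mul_of_nonneg_left ?_ (by linarith))
        exact mul_le_of_le_one_right hΨN.le h5
      have h7 : 2 ≤ 2 * a / Ψ 1 * Ψ ((N : ℝ) ^ (1 / r)) := by
        rw [div_mul_eq_mul_div, le_div_iff₀ hP]; linarith
      have h8 : 1 ≤ l ^ 3 := one_le_pow₀ hl1
      nlinarith
    have e : (C4 + 2 * a / Ψ 1) * Ψ ((N : ℝ) ^ (1 / r)) * l ^ 3 =
      C4 * Ψ ((N : ℝ) ^ (1 / r)) * l ^ 3 + 2 * a / Ψ 1 * Ψ ((N : ℝ) ^ (1 / r)) * l ^ 3 := by ring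
    rw [e]
    linarith
  · clear_value M x0
    intro Y hY
    have hMne : Nonempty (Fin M) := ⟨⟨0, by exact_mod_cast (by linarith : (0 : ℝ) < M)⟩⟩
    obtain ⟨x, hx⟩ := core_gen hΦ hr1 hr2 hΨ (fun _ : Fin M => 1 / (M : ℝ))
      (fun _ => by positivity) (by
        rw [Finset.sum_const, Finset.card_univ, Fintype.card_fin, nsmul_eq_mul]
        field_simp) N hN Y hY H (by
        intro d u hu j _
        obtain ⟨T, hT, hc⟩ := hu.fine_net (M : ℝ) hM1 (by simp) j
        refine ⟨T, hT, hc.trans (Real.exp_le_exp.2 ?_)⟩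
        have := Real.rpow_nonneg (hu.scale_pos j).le (-r)
        rw [hH]
        gcongr
        linarith) (by
        have h1 : Real.log (64 * AN q N) ≤ Real.log (64 * AN q N * M) :=
          Real.log_le_log (by linarith) (le_mul_of_one_le_right (by linarith) hM1)
        have h2 := mul_le_mul_of_nonneg_left h1 (by linarith : 0 ≤ AN q N)
        have h3 : 0 ≤ AN q N * Real.log (64 * AN q N * M) := by positivity
        rw [hH]
        linarith) n hn1 hn2 (⌈x0⌉₊ + 1) (by
        push_cast
        linarith [Nat.le_ceil x0])
    refine ⟨x, fun f hf h1 => hx f hf ?_⟩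
    rw [← Finset.mul_sum, one_div, ← div_eq_inv_mul, one_le_div (by linarith)]
    exact h1

end


theorem compose {Φ : ℝ → ℝ} {r : ℝ} {q : ℕ} (hΦ : PhiOK Φ r q) (hr1 : 1 ≤ r) (hr2 : r ≤ 2)
    {Ψ : ℝ → ℝ} {K a : ℝ} (hΨ : PsiOK Φ Ψ r q K a) : ∃ c : ℝ, 0 < c ∧ ∀ (N : ℕ), 1 ≤ N →
    ∃ m : ℕ, 0 < m ∧ (m : ℝ) ≤ c * Ψ ((N : ℝ) ^ (1 / r)) * Real.logb 2 (2 * N) ^ 3 ∧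
    ∀ (Ω : Type) (ι : Type) [Fintype ι] [Nonempty ι] (z : ι → Ω) (μ : ι → ℝ)
      (X : Submodule ℝ (Ω → ℝ)), (∀ i, 0 < μ i) → ∑ i, μ i = 1 →
      FiniteDimensional ℝ X → Module.finrank ℝ X ≤ N →
    ∃ x : Fin m → Ω, ∀ f ∈ X, 1 ≤ ∑ i, μ i * Φ |f (z i)| →
      (m : ℝ) ≤ ∑ j, Φ ((96 * 4 ^ q) ^ 2 * |f (x j)|) := by
  obtain ⟨c, hc, hfine⟩ := core_fine hΦ hr1 hr2 hΨ
  refine ⟨c, hc, fun N hN => ?_⟩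
  obtain ⟨m, hm, hmc, hm2⟩ := hfine N hN
  refine ⟨m, hm, hmc, ?_⟩
  intro Ω ι _ _ z μ X hμ hμ1 hX hXN
  obtain ⟨x1, hx1⟩ := core_crude hΦ hr1 hr2 hΨ μ hμ hμ1 N hN
    (X.map (LinearMap.funLeft ℝ ℝ z)) ((Submodule.finrank_map_le _ _).trans hXN)
  obtain ⟨x2, hx2⟩ := hm2 (X.map (LinearMap.funLeft ℝ ℝ (z ∘ x1)))
    ((Submodule.finrank_map_le _ _).trans hXN)
  refine ⟨fun j => z (x1 (x2 j)), fun f hf h1 => ?_⟩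
  have h2 := hx1 _ (Submodule.mem_map_of_mem hf) h1
  have hk : (0 : ℝ) ≤ 96 * 4 ^ q := by positivity
  have h3 := hx2 _ (Submodule.mem_map_of_mem (X.smul_mem (96 * 4 ^ q) hf)) (by
    refine h2.trans_eq (Finset.sum_congr rfl fun i _ => ?_)
    simp only [LinearMap.funLeft_apply, Pi.smul_apply, smul_eq_mul, Function.comp, abs_mul,
      abs_of_nonneg hk])
  refine h3.trans_eq (Finset.sum_congr rfl fun i _ => ?_)
  simp only [LinearMap.funLeft_apply, Pi.smul_apply, smul_eq_mul, Function.comp, abs_mul,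
      abs_of_nonneg hk]
  rw [← mul_assoc, sq]

theorem unisolvent {Ω : Type} (X : Submodule ℝ (Ω → ℝ)) [FiniteDimensional ℝ X] :
    ∃ s : Finset Ω, ∀ f ∈ X, (∀ y ∈ s, f y = 0) → f = 0 := by
  classical
  let Z : Finset Ω → Submodule ℝ X := fun s =>
    { carrier := {f | ∀ y ∈ s, f.1 y = 0}
      zero_mem' := by intro y _; rfl
      add_mem' := by
        intro f g hf hg y hy
        simp [hf y hy, hg y hy]
      smul_mem' := by
        intro c f hf y hy
        simp [hf y hy] }
  obtain ⟨S, ⟨s, rfl⟩, hmin⟩ := (wellFounded_lt (α := Submodule ℝ X)).has_min (Set.range Z)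
    ⟨_, ∅, rfl⟩
  refine ⟨s, fun f hf h0 => ?_⟩
  funext x
  have hle : Z (insert x s) ≤ Z s := fun g hg y hy => hg y (Finset.mem_insert_of_mem hy)
  have hnot := hmin (Z (insert x s)) ⟨_, rfl⟩
  have heq : Z (insert x s) = Z s := by
    by_contra hne
    exact hnot (lt_of_le_of_ne hle hne)
  have hfm : (⟨f, hf⟩ : X) ∈ Z s := h0
  rw [← heq] at hfm
  exact hfm x (Finset.mem_insert_self _ _)

theorem lagrange {Ω : Type} (X : Submodule ℝ (Ω → ℝ)) [FiniteDimensional ℝ X] (s : Finset Ω)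
    (hs : ∀ f ∈ X, (∀ y ∈ s, f y = 0) → f = 0) :
    ∃ l : s → Ω → ℝ, (∀ y, l y ∈ X) ∧ ∀ f ∈ X, ∀ x, f x = ∑ y : s, f y * l y x := by
  classical
  let L : X →ₗ[ℝ] (s → ℝ) := (LinearMap.funLeft ℝ ℝ (fun y : s => (y : Ω))).comp X.subtype
  have hL : LinearMap.ker L = ⊥ := by
    rw [LinearMap.ker_eq_bot']
    intro f hf
    apply Subtype.ext
    refine hs f.1 f.2 fun y hy => ?_
    exact congrFun hf ⟨y, hy⟩
  obtain ⟨g, hg⟩ := L.exists_leftInverse_of_injective hL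
  refine ⟨fun y => (g (Pi.single y 1)).1, fun y => (g _).2, fun f hf x => ?_⟩
  have h1 : g (L ⟨f, hf⟩) = ⟨f, hf⟩ := LinearMap.congr_fun hg _
  rw [LinearMap.pi_apply_eq_sum_univ] at h1
  have h2 := congrArg (fun h : X => h.1 x) h1
  simp only [Submodule.coe_sum, Submodule.coe_smul, Finset.sum_apply, Pi.smul_apply,
    smul_eq_mul] at h2
  rw [← h2]
  refine Finset.sum_congr rfl fun y _ => ?_
  have e : (fun j => if y = j then (1 : ℝ) else 0) = Pi.single y 1 := by
    funext j
    simp [Pi.single_apply, eq_comm]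
  rw [e]
  rfl

theorem exists_simple_near {Ω : Type} [MetricSpace Ω] [CompactSpace Ω] [MeasurableSpace Ω]
    [BorelSpace Ω] [Nonempty Ω] (δ : ℝ) (hδ : 0 < δ) :
    ∃ P : SimpleFunc Ω Ω, ∀ x, dist (P x) x < δ := by
  obtain ⟨t, ht⟩ := isCompact_univ.elim_finite_subcover
    (fun n : ℕ => Metric.ball (TopologicalSpace.denseSeq Ω n) δ) (fun _ => Metric.isOpen_ball) (by
      intro x _
      obtain ⟨n, hn⟩ := (TopologicalSpace.denseRange_denseSeq Ω).exists_dist_lt x hδ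
      exact Set.mem_iUnion.2 ⟨n, hn⟩)
  refine ⟨SimpleFunc.nearestPt (TopologicalSpace.denseSeq Ω) (t.sup id), fun x => ?_⟩
  have hx := ht (Set.mem_univ x)
  simp only [Set.mem_iUnion] at hx
  obtain ⟨k, hk, hkx⟩ := hx
  have h1 := SimpleFunc.edist_nearestPt_le (TopologicalSpace.denseSeq Ω) x
    (Finset.le_sup (f := id) hk)
  rw [Metric.mem_ball, dist_comm] at hkx
  rw [edist_dist, edist_dist, ENNReal.ofReal_le_ofReal_iff dist_nonneg] at h1
  exact h1.trans_lt hkx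

theorem simple_integral {Ω : Type} [MeasurableSpace Ω] (μ : Measure Ω) [IsProbabilityMeasure μ]
    (P : SimpleFunc Ω Ω) (g : Ω → ℝ) :
    Integrable (fun x => g (P x)) μ ∧
    ∫ x, g (P x) ∂μ = ∑ z ∈ P.range, μ.real (P ⁻¹' {z}) * g z := by
  have e : (fun x => g (P x)) =
      fun x => ∑ z ∈ P.range, (P ⁻¹' {z}).indicator (fun _ => g z) x := by
    funext x
    rw [Finset.sum_eq_single (P x)]
    · simp
    · intro z _ hz
      rw [Set.indicator_of_notMem]
      intro h
      exact hz h.symm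
    · intro h
      exact absurd (P.mem_range_self x) h
  have hi : ∀ z ∈ P.range, Integrable (fun x => (P ⁻¹' {z}).indicator (fun _ => g z) x) μ :=
    fun z _ => (integrable_const _).indicator (P.measurableSet_preimage _)
  refine ⟨by rw [e]; exact integrable_finsetSum _ hi, ?_⟩
  rw [e, integral_finsetSum _ hi]
  refine Finset.sum_congr rfl fun z _ => ?_
  rw [integral_indicator (P.measurableSet_preimage _), setIntegral_const, smul_eq_mul]


theorem discretize {Φ : ℝ → ℝ} {r : ℝ} {q : ℕ} (hΦ : PhiOK Φ r q) (hr1 : 1 ≤ r)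
    {Ω : Type} [MetricSpace Ω] [CompactSpace Ω] [MeasurableSpace Ω] [BorelSpace Ω]
    (μ : Measure Ω) [IsProbabilityMeasure μ] (X : Submodule ℝ (Ω → ℝ))
    (hXc : ∀ f ∈ X, Continuous f) [FiniteDimensional ℝ X] :
    ∃ (S : Finset Ω) (w : Ω → ℝ), S.Nonempty ∧ (∀ z ∈ S, 0 < w z) ∧ ∑ z ∈ S, w z = 1 ∧
      ∀ f ∈ X, 1 ≤ ∫ x, Φ |f x| ∂μ → 1 ≤ ∑ z ∈ S, w z * Φ (4 * |f z|) := by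
  classical
  have hne : Nonempty Ω := by
    by_contra h
    rw [not_nonempty_iff] at h
    have h1 : μ Set.univ = 1 := measure_univ
    rw [Set.univ_eq_empty_iff.2 h, measure_empty] at h1
    exact zero_ne_one h1
  obtain ⟨s0, hs0⟩ := unisolvent X
  obtain ⟨s, hsne, hs⟩ : ∃ s : Finset Ω, s.Nonempty ∧ ∀ f ∈ X, (∀ y ∈ s, f y = 0) → f = 0 :=
    ⟨insert (Classical.arbitrary Ω) s0, Finset.insert_nonempty _ _, fun f hf h =>
      hs0 f hf fun y hy => h y (Finset.mem_insert_of_mem hy)⟩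
  obtain ⟨l, hlX, hl⟩ := lagrange X s hs
  have hP1 := hΦ.pos 1 one_pos
  obtain ⟨cs, hcs⟩ : ∃ cs : ℝ, cs = s.card := ⟨_, rfl⟩
  have hcard : 0 < cs := by rw [hcs]; exact_mod_cast hsne.card_pos
  obtain ⟨D, hD⟩ : ∃ D : ℝ, D = 1 + cs / Φ 1 := ⟨_, rfl⟩
  have hD1 : 1 ≤ D := by rw [hD]; have := div_pos hcard hP1; linarith
  have hΦD : cs < Φ D := by
    have h1 := hΦ.low1 hr1 D 1 hD1 zero_le_one
    rw [mul_one] at h1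
    have h2 : D * Φ 1 = Φ 1 + cs := by rw [hD]; field_simp
    linarith
  let G : (s → ℝ) × Ω → ℝ := fun c => Φ |∑ y, c.1 y * l y c.2|
  have hG : Continuous G := by
    refine hΦ.cont.comp ?_
    refine continuous_finsetSum _ fun y _ => ?_
    have := hXc _ (hlX y)
    fun_prop
  have hcomp : IsCompact ((Metric.closedBall (0 : s → ℝ) D) ×ˢ (Set.univ : Set Ω)) :=
    (isCompact_closedBall _ _).prod isCompact_univ
  have huc := hcomp.uniformContinuousOn_of_continuous hG.continuousOn
  rw [Metric.uniformContinuousOn_iff] at huc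
  obtain ⟨δ, hδ, huc⟩ := huc (1 / 4) (by norm_num)
  obtain ⟨P, hP⟩ := exists_simple_near (Ω := Ω) δ hδ
  obtain ⟨S, hS⟩ : ∃ S : Finset Ω, S = P.range ∪ s := ⟨_, rfl⟩
  have hsS : s ⊆ S := hS ▸ Finset.subset_union_right
  have hPS : P.range ⊆ S := hS ▸ Finset.subset_union_left
  have hSne : S.Nonempty := hsne.mono hsS
  obtain ⟨cS, hcS⟩ : ∃ cS : ℝ, cS = S.card := ⟨_, rfl⟩
  have hScard : 0 < cS := by rw [hcS]; exact_mod_cast hSne.card_pos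
  have hμsum : ∑ z ∈ S, μ.real (P ⁻¹' {z}) = 1 := by
    have h1 := (simple_integral μ P (fun _ => 1)).2
    simp only [integral_const, probReal_univ, smul_eq_mul, mul_one] at h1
    rw [h1]
    symm
    refine Finset.sum_subset hPS fun z _ hz => ?_
    have : P ⁻¹' {z} = ∅ := by
      rw [Set.eq_empty_iff_forall_notMem]
      intro x hx
      exact hz (by rw [← (show P x = z from hx)]; exact P.mem_range_self x)
    rw [this, measureReal_empty]
  refine ⟨S, fun z => 1 / 2 * μ.real (P ⁻¹' {z}) + (1 / 4 * (if z ∈ s then 1 / cs else 0)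
    + 1 / 4 * (1 / cS)), hSne, ?_, ?_, ?_⟩
  · intro z _
    have h1 : 0 ≤ μ.real (P ⁻¹' {z}) := measureReal_nonneg
    have h2 : 0 ≤ (if z ∈ s then 1 / cs else 0) := by split_ifs <;> positivity
    positivity
  · rw [Finset.sum_add_distrib, Finset.sum_add_distrib, ← Finset.mul_sum, ← Finset.mul_sum, hμsum,
      ← Finset.sum_filter, Finset.filter_mem_eq_inter, Finset.inter_eq_right.2 hsS,
      Finset.sum_const, Finset.sum_const, nsmul_eq_mul, nsmul_eq_mul,
      ← hcs, ← hcS]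
    field_simp
    norm_num
  · intro f hf h1
    have hfc := hXc f hf
    have h4 : ∀ z, 4 * Φ |f z| ≤ Φ (4 * |f z|) := fun z =>
      hΦ.low1 hr1 4 _ (by norm_num) (abs_nonneg _)
    have h0 : ∀ z, 0 ≤ Φ |f z| := fun z => hΦ.nonneg _ (abs_nonneg _)
    by_contra hcon
    push Not at hcon
    have hlt : ∑ z ∈ S, (1 / 2 * μ.real (P ⁻¹' {z}) +
        (1 / 4 * (if z ∈ s then 1 / cs else 0) + 1 / 4 * (1 / cS))) * Φ |f z| <
        1 / 4 := by
      have h5 : 4 * ∑ z ∈ S, (1 / 2 * μ.real (P ⁻¹' {z}) +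
        (1 / 4 * (if z ∈ s then 1 / cs else 0) + 1 / 4 * (1 / cS))) * Φ |f z| < 1 := by
        refine lt_of_le_of_lt ?_ hcon
        rw [Finset.mul_sum]
        refine Finset.sum_le_sum fun z _ => ?_
        have h2 : 0 ≤ (if z ∈ s then 1 / cs else 0) := by split_ifs <;> positivity
        have h6 : 0 ≤ 1 / 2 * μ.real (P ⁻¹' {z}) +
          (1 / 4 * (if z ∈ s then 1 / cs else 0) + 1 / 4 * (1 / cS)) := by
          have h1 : 0 ≤ μ.real (P ⁻¹' {z}) := measureReal_nonneg
          positivity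
        have h7 := mul_le_mul_of_nonneg_left (h4 z) h6
        linarith
      linarith
    simp only [add_mul, Finset.sum_add_distrib] at hlt
    have hA : ∑ z ∈ S, 1 / 2 * μ.real (P ⁻¹' {z}) * Φ |f z| =
        1 / 2 * ∑ z ∈ S, μ.real (P ⁻¹' {z}) * Φ |f z| := by
      rw [Finset.mul_sum]
      exact Finset.sum_congr rfl fun _ _ => by ring
    have hA0 : 0 ≤ ∑ z ∈ S, μ.real (P ⁻¹' {z}) * Φ |f z| :=
      Finset.sum_nonneg fun z _ => mul_nonneg measureReal_nonneg (h0 z)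
    have hB : ∑ z ∈ S, 1 / 4 * (if z ∈ s then 1 / cs else 0) * Φ |f z| =
        1 / 4 * (1 / cs) * ∑ z ∈ s, Φ |f z| := by
      rw [Finset.mul_sum, ← Finset.sum_subset hsS]
      · exact Finset.sum_congr rfl fun z hz => by rw [if_pos hz]
      · intro z _ hz
        rw [if_neg hz]; ring
    have hB0 : 0 ≤ ∑ z ∈ s, Φ |f z| := Finset.sum_nonneg fun z _ => h0 z
    have hC0 : 0 ≤ ∑ z ∈ S, 1 / 4 * (1 / cS) * Φ |f z| :=
      Finset.sum_nonneg fun z _ => mul_nonneg (by positivity) (h0 z)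
    rw [hA, hB] at hlt
    have hB1 : 0 ≤ 1 / 4 * (1 / cs) * ∑ z ∈ s, Φ |f z| := by positivity
    have hBs : ∑ z ∈ s, Φ |f z| < cs := by
      have h5 : 1 / 4 * (1 / cs) * ∑ z ∈ s, Φ |f z| < 1 / 4 := by linarith
      have h6 : (1 / cs) * ∑ z ∈ s, Φ |f z| < 1 := by linarith
      rwa [one_div_mul_eq_div, div_lt_one hcard] at h6
    have hfy : ∀ y ∈ s, |f y| ≤ D := by
      intro y hy
      by_contra hy2
      push Not at hy2
      have h5 := hΦ.mono D _ (by linarith) hy2.le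
      have h6 := Finset.single_le_sum (f := fun z => Φ |f z|) (fun z _ => h0 z) hy
      linarith
    have hmem : ∀ x : Ω, ((fun y : s => f y), x) ∈
        (Metric.closedBall (0 : s → ℝ) D) ×ˢ (Set.univ : Set Ω) := by
      intro x
      refine ⟨?_, Set.mem_univ _⟩
      rw [mem_closedBall_zero_iff, pi_norm_le_iff_of_nonneg (by linarith)]
      intro y
      exact hfy y y.2
    have hclose : ∀ x, Φ |f x| ≤ Φ |f (P x)| + 1 / 4 := by
      intro x
      have h5 := huc _ (hmem x) _ (hmem (P x)) (by
        rw [Prod.dist_eq, dist_self, max_eq_right dist_nonneg, dist_comm]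
        exact hP x)
      simp only [G] at h5
      rw [← hl f hf x, ← hl f hf (P x), Real.dist_eq] at h5
      linarith [(abs_lt.1 h5).2]
    obtain ⟨hi, he⟩ := simple_integral μ P (fun z => Φ |f z|)
    have hIntg : Integrable (fun x => Φ |f x|) μ :=
      (hΦ.cont.comp hfc).integrable_of_hasCompactSupport (HasCompactSupport.of_compactSpace _)
    have h5 : ∫ x, Φ |f x| ∂μ ≤ ∫ x, (Φ |f (P x)| + 1 / 4) ∂μ :=
      integral_mono hIntg (hi.add (integrable_const _)) hclose
    rw [integral_add hi (integrable_const _), he] at h5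
    simp only [integral_const, probReal_univ, smul_eq_mul, one_mul] at h5
    have h6 : ∑ z ∈ P.range, μ.real (P ⁻¹' {z}) * Φ |f z| ≤
        ∑ z ∈ S, μ.real (P ⁻¹' {z}) * Φ |f z| :=
      Finset.sum_le_sum_of_subset_of_nonneg hPS fun z _ _ => mul_nonneg measureReal_nonneg (h0 z)
    linarith


theorem prefun_pos {Φ : ℝ → ℝ} (h : IsPhiPrefun Φ) {q : ℝ} (hq : DecQ Φ q) (t : ℝ) (ht : 0 < t) :
    0 < Φ t := by
  obtain ⟨T, hT, hT1⟩ := ((h.tendsto_atTop.eventually_ge_atTop 1).and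
    (Filter.eventually_gt_atTop t)).exists
  have h1 := hq t T ht hT1
  have hT0 : 0 < T := ht.trans hT1
  have h2 : 0 < Φ T / T ^ q := div_pos (by linarith) (Real.rpow_pos_of_pos hT0 _)
  have h3 := h2.trans_le h1
  rcases (h.nonneg t ht.le).lt_or_eq with h4 | h4
  · exact h4
  · rw [← h4, zero_div] at h3
    exact absurd h3 (lt_irrefl _)

theorem dec_up {Φ : ℝ → ℝ} (h : IsPhiPrefun Φ) {q0 : ℝ} (hq : DecQ Φ q0) (q : ℕ) (hqq : q0 ≤ q)
    (y t : ℝ) (hy : 1 ≤ y) (ht : 0 < t) : Φ (y * t) ≤ y ^ q * Φ t := by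
  have hn := h.nonneg t ht.le
  rcases hy.eq_or_lt with rfl | hy1
  · simp
  · have h1 := hq t (y * t) ht (by nlinarith)
    have hy0 : 0 < y := by linarith
    rw [Real.mul_rpow hy0.le ht.le] at h1
    have ht' := Real.rpow_pos_of_pos ht q0
    have hy' := Real.rpow_pos_of_pos hy0 q0
    rw [div_le_div_iff₀ (by positivity) ht'] at h1
    have h2 : Φ (y * t) ≤ Φ t * y ^ q0 := by
      refine le_of_mul_le_mul_right ?_ ht'
      linarith
    have h3 : y ^ q0 ≤ y ^ q := by
      rw [← Real.rpow_natCast]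
      exact Real.rpow_le_rpow_of_exponent_le hy hqq
    calc Φ (y * t) ≤ Φ t * y ^ q0 := h2
      _ ≤ Φ t * y ^ q := mul_le_mul_of_nonneg_left h3 hn
      _ = _ := mul_comm _ _

theorem inc_low {Φ : ℝ → ℝ} (h : IsPhiPrefun Φ) {p : ℝ} (hp : IncP Φ p) {r : ℝ} (hr : r ≤ p)
    (y t : ℝ) (hy : 1 ≤ y) (ht : 0 < t) : y ^ r * Φ t ≤ Φ (y * t) := by
  have hn := h.nonneg t ht.le
  rcases hy.eq_or_lt with rfl | hy1
  · simp
  · have h1 := hp t (y * t) ht (by nlinarith)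
    have hy0 : 0 < y := by linarith
    rw [Real.mul_rpow hy0.le ht.le] at h1
    have ht' := Real.rpow_pos_of_pos ht p
    have hy' := Real.rpow_pos_of_pos hy0 p
    rw [div_le_div_iff₀ ht' (by positivity)] at h1
    have h2 : Φ t * y ^ p ≤ Φ (y * t) := by
      refine le_of_mul_le_mul_right ?_ ht'
      linarith
    have h3 : y ^ r ≤ y ^ p := Real.rpow_le_rpow_of_exponent_le hy hr
    calc y ^ r * Φ t ≤ y ^ p * Φ t := mul_le_mul_of_nonneg_right h3 hn
      _ = Φ t * y ^ p := mul_comm _ _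
      _ ≤ _ := h2

theorem phiOK_of {Φ φ : ℝ → ℝ} (h : IsPhiPrefun Φ) {p : ℝ} (hp : IncP Φ p) {r : ℝ} (hr : r ≤ p)
    {q0 : ℝ} (hq : DecQ Φ q0) (q : ℕ) (hqq : q0 ≤ q)
    (hderiv : ∀ t : ℝ, 0 < t → HasDerivAt Φ (φ t) t) : PhiOK Φ r q where
  zero := h.map_zero
  pos := prefun_pos h hq
  mono := fun s t hs hst => h.mono hs (hs.trans hst) hst
  low := by
    intro y t hy ht
    rcases ht.eq_or_lt with rfl | ht
    · simp [h.map_zero]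
    · exact inc_low h hp hr y t hy ht
  up := by
    intro y t hy ht
    rcases ht.eq_or_lt with rfl | ht
    · simp [h.map_zero]
    · exact dec_up h hq q hqq y t hy ht
  cont := by
    have hc : ContinuousOn Φ (Set.Ici 0) := by
      intro t ht
      rcases (show 0 ≤ t from ht).eq_or_lt with rfl | ht
      · rw [← continuousWithinAt_Ioi_iff_Ici]
        unfold ContinuousWithinAt
        rw [h.map_zero]
        exact h.tendsto_zero
      · exact (hderiv t ht).continuousAt.continuousWithinAt
    exact hc.comp_continuous continuous_abs fun t => abs_nonneg t

theorem psiOK_of {Φ Ψ : ℝ → ℝ} (hΦ0 : ∀ t, 0 < t → 0 < Φ t) (hz : Φ 0 = 0)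
    (h : IsPhiPrefun Ψ) {p a : ℝ} (ha : 1 ≤ a) (hp : AIncP Ψ p a)
    {r : ℝ} (hr : r ≤ p) {q0 : ℝ} (hq : DecQ Ψ q0) (q : ℕ) (hqq : q0 ≤ q) {K : ℝ} (hK1 : 1 ≤ K)
    (hK : ∀ t s : ℝ, 0 < t → 0 < s → Φ (t * s) / Φ t ≤ K * Ψ s) : PsiOK Φ Ψ r q K a where
  K1 := hK1
  a1 := ha
  pos := prefun_pos h hq
  aInc := by
    intro s t hs hst
    have ht : 0 < t := hs.trans_le hst
    rcases hst.eq_or_lt with rfl | hlt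
    · refine le_mul_of_one_le_left ?_ ha
      exact mul_nonneg (h.nonneg _ hs.le) (Real.rpow_nonneg hs.le _)
    · have h1 := hp s t hs hlt
      have e : ∀ x : ℝ, 0 < x → Ψ x * x ^ (-r) = Ψ x / x ^ p * x ^ (p - r) := by
        intro x hx
        rw [div_eq_mul_inv, ← Real.rpow_neg hx.le, mul_assoc, ← Real.rpow_add hx]
        congr 2
        ring
      rw [e s hs, e t ht, ← mul_assoc]
      refine mul_le_mul h1 (Real.rpow_le_rpow hs.le hst (by linarith)) (Real.rpow_nonneg hs.le _) ?_
      have := h.nonneg t ht.le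
      positivity
  up := fun y t hy ht => dec_up h hq q hqq y t hy ht
  dom := by
    intro w s hw hs
    rcases hw.eq_or_lt with rfl | hw
    · simp [hz]
    · have h1 := hK w s hw hs
      rwa [div_le_iff₀ (hΦ0 w hw)] at h1

/-- Remark rem5.1. Under the same assumptions on `Φ` and `Ψ` as in
Theorem t5.1, for every `N`-dimensional subspace `X_N ⊂ C(Ω)` (no further assumptions) there
are `m ≤ c Ψ(N^{1/min{p,2}})(log₂ 2N)³` points `x₁,…,x_m ∈ Ω` such that
`‖f‖_Φ ≤ C (M_{Φ,Ψ}(m))^{1/p} ‖f‖_{Ψ,x}` for all `f ∈ X_N`, with equal weights `1/m`. -/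
theorem statement14 (p : ℝ) (hp : 1 < p)
    (Φ φ : ℝ → ℝ) (hpre : IsPhiPrefun Φ) (hphiw : ∃ a : ℝ, 1 ≤ a ∧ AIncP Φ 1 a)
    (hinc : IncP Φ p) (hdecΦ : ∃ q : ℝ, 1 ≤ q ∧ DecQ Φ q)
    (hsupfin : ∃ M : ℝ, ∀ t : ℝ, 0 < t → Φ t * Φ t⁻¹ ≤ M)
    (hderiv : ∀ t : ℝ, 0 < t → HasDerivAt Φ (φ t) t)
    (hφcont : ContinuousOn φ (Set.Ioi 0))
    (Ψ : ℝ → ℝ) (hpreΨ : IsPhiPrefun Ψ) (hpsiw : ∃ a : ℝ, 1 ≤ a ∧ AIncP Ψ 1 a)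
    (aΨ : ℝ) (haΨ : 1 ≤ aΨ) (hAΨ : AIncP Ψ p aΨ)
    (hdecΨ : ∃ q : ℝ, 1 ≤ q ∧ DecQ Ψ q)
    (K : ℝ) (hK1 : 1 ≤ K)
    (hK : ∀ t s : ℝ, 0 < t → 0 < s → Φ (t * s) / Φ t ≤ K * Ψ s) :
    ∃ C c : ℝ, 0 < C ∧ 0 < c ∧
      ∀ (Ω : Type) [MetricSpace Ω] [CompactSpace Ω] [MeasurableSpace Ω] [BorelSpace Ω],
      ∀ (μ : Measure Ω), IsProbabilityMeasure μ →
      ∀ N : ℕ, 1 ≤ N →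
      ∀ X : Submodule ℝ (Ω → ℝ),
        (∀ f ∈ X, Continuous f) →
        Module.finrank ℝ X = N →
        ∃ (m : ℕ) (x : Fin m → Ω),
          (m : ℝ) ≤ c * Ψ ((N : ℝ) ^ (1 / min p 2)) * (Real.logb 2 (2 * N)) ^ 3 ∧
          ∀ f ∈ X, luxNorm μ Φ f ≤ C * (MOf Φ Ψ m) ^ (1 / p) * discLuxNorm Ψ x f := by
  obtain ⟨qa, _, hqa⟩ := hdecΦ
  obtain ⟨qb, _, hqb⟩ := hdecΨ
  obtain ⟨q, hq⟩ := exists_nat_ge (max qa qb)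
  have hr1 : 1 ≤ min p 2 := le_min hp.le (by norm_num)
  have hΦ : PhiOK Φ (min p 2) q :=
    phiOK_of hpre hinc (min_le_left _ _) hqa q ((le_max_left _ _).trans hq) hderiv
  have hΨ : PsiOK Φ Ψ (min p 2) q K aΨ :=
    psiOK_of hΦ.pos hΦ.zero hpreΨ haΨ hAΨ (min_le_left _ _) hqb q ((le_max_right _ _).trans hq)
      hK1 hK
  obtain ⟨c, hc, hcomp⟩ := compose hΦ hr1 (min_le_right _ _) hΨ
  obtain ⟨k, hk⟩ : ∃ k : ℝ, k = (96 * 4 ^ q) ^ 2 := ⟨_, rfl⟩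
  have hk0 : 0 < k := by rw [hk]; positivity
  obtain ⟨b, hb⟩ : ∃ b : ℝ, b = max 1 (K * Φ 1) := ⟨_, rfl⟩
  have hb1 : 1 ≤ b := hb ▸ le_max_left _ _
  have hdom : ∀ t, 0 ≤ t → Φ t ≤ b * Ψ t := by
    intro t ht
    rcases ht.eq_or_lt with rfl | ht
    · rw [hpre.map_zero, hpreΨ.map_zero, mul_zero]
    · have h1 := hΨ.dom 1 t zero_le_one ht
      rw [one_mul] at h1
      have h2 : K * Φ 1 ≤ b := hb ▸ le_max_right _ _
      have h3 := mul_le_mul_of_nonneg_right h2 (hpreΨ.nonneg t ht.le)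
      linarith
  refine ⟨2 * b * (4 * k), c, by positivity, hc, ?_⟩
  intro Ω _ _ _ _ μ hμ N hN X hXc hXN
  have hfd : FiniteDimensional ℝ X := Module.finite_of_finrank_pos (by omega)
  obtain ⟨m, hm, hmc, hm2⟩ := hcomp N hN
  obtain ⟨S, w, hS, hw, hw1, hdisc⟩ := discretize hΦ hr1 μ X hXc
  have hSne : Nonempty S := hS.to_subtype
  obtain ⟨x, hx⟩ := hm2 Ω S (fun z => z.1) (fun z => w z.1) X (fun z => hw z.1 z.2)
    (by rw [Finset.sum_coe_sort S w]; exact hw1) hfd hXN.le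
  refine ⟨m, x, hmc, fun f hf => ?_⟩
  have hm0 : (0 : ℝ) < m := by exact_mod_cast hm
  have key : ∀ g ∈ X, 1 ≤ ∫ y, Φ |g y| ∂μ → (m : ℝ) ≤ ∑ j, Φ (4 * k * |g (x j)|) := by
    intro g hg h1
    have h2 := hdisc g hg h1
    have h3 := hx _ (X.smul_mem 4 hg) (by
      rw [← Finset.sum_coe_sort S (fun z => w z * Φ (4 * |g z|))] at h2
      simpa [abs_mul] using h2)
    refine h3.trans_eq (Finset.sum_congr rfl fun j _ => ?_)
    rw [Pi.smul_apply, smul_eq_mul, abs_mul, ← hk, abs_of_nonneg (by norm_num : (0 : ℝ) ≤ 4)]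
    congr 1
    ring
  have main : ∀ lam : ℝ, 0 < lam → (∑ j, Ψ (|f (x j)| / lam)) / (m : ℝ) ≤ 1 →
      luxNorm μ Φ f ≤ 2 * b * (4 * k) * lam := by
    intro lam hlam h1
    rw [div_le_one hm0] at h1
    have hL : 0 < 2 * b * (4 * k) * lam := by positivity
    refine csInf_le ⟨0, fun y hy => hy.1.le⟩ ⟨hL, ?_⟩
    by_contra hcon
    push Not at hcon
    have h2 := key ((2 * b * (4 * k) * lam)⁻¹ • f) (X.smul_mem _ hf) (by
      refine hcon.le.trans_eq ?_
      congr 1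
      funext y
      rw [Pi.smul_apply, smul_eq_mul, abs_mul, abs_of_pos (inv_pos.2 hL), div_eq_inv_mul])
    have h3 : ∀ j, Φ (4 * k * |((2 * b * (4 * k) * lam)⁻¹ • f) (x j)|) ≤
        1 / 2 * Ψ (|f (x j)| / lam) := by
      intro j
      have e : 4 * k * |((2 * b * (4 * k) * lam)⁻¹ • f) (x j)| = |f (x j)| / lam / (2 * b) := by
        rw [Pi.smul_apply, smul_eq_mul, abs_mul, abs_of_pos (inv_pos.2 hL)]
        field_simp
      rw [e]
      have h4 : 0 ≤ |f (x j)| / lam := by positivity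
      have h5 := hΦ.low1 hr1 (2 * b) (|f (x j)| / lam / (2 * b)) (by linarith) (by positivity)
      rw [mul_div_cancel₀ _ (by positivity)] at h5
      have h6 := hdom _ h4
      have h7 : b * (2 * Φ (|f (x j)| / lam / (2 * b))) ≤ b * Ψ (|f (x j)| / lam) := by linarith
      have h8 := le_of_mul_le_mul_left h7 (by linarith)
      linarith
    have h9 := Finset.sum_le_sum fun j (_ : j ∈ Finset.univ) => h3 j
    rw [← Finset.mul_sum] at h9
    linarith
  have hset : {lam : ℝ | 0 < lam ∧ (∑ j, Ψ (|f (x j)| / lam)) / (m : ℝ) ≤ 1}.Nonempty := by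
    have hlim := hpreΨ.tendsto_zero.eventually_le_const (zero_lt_one : (0 : ℝ) < 1)
    obtain ⟨t, ht1, ht0⟩ := (hlim.and self_mem_nhdsWithin).exists
    have ht0 : 0 < t := ht0
    obtain ⟨B, hB⟩ : ∃ B : ℝ, B = ∑ j, |f (x j)| := ⟨_, rfl⟩
    have hB0 : 0 ≤ B := hB ▸ Finset.sum_nonneg fun _ _ => abs_nonneg _
    refine ⟨(B + 1) / t, by positivity, ?_⟩
    rw [div_le_one hm0]
    have h1 : ∀ j, Ψ (|f (x j)| / ((B + 1) / t)) ≤ 1 := by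
      intro j
      refine le_trans (hpreΨ.mono (show (0 : ℝ) ≤ _ by positivity) ht0.le ?_) ht1
      have h2 : |f (x j)| ≤ B := hB ▸ Finset.single_le_sum (f := fun j => |f (x j)|)
        (fun _ _ => abs_nonneg _) (Finset.mem_univ j)
      rw [div_div_eq_mul_div, div_le_iff₀ (by positivity)]
      nlinarith
    calc ∑ j, Ψ (|f (x j)| / ((B + 1) / t)) ≤ ∑ _j : Fin m, (1 : ℝ) :=
          Finset.sum_le_sum fun j _ => h1 j
      _ = m := by simp
  have hdn : 0 ≤ discLuxNorm Ψ x f := le_csInf hset fun y hy => hy.1.le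
  have hfin : luxNorm μ Φ f ≤ 2 * b * (4 * k) * discLuxNorm Ψ x f := by
    have hC : 0 < 2 * b * (4 * k) := by positivity
    rw [← div_le_iff₀' hC]
    refine le_csInf hset fun lam hlam => ?_
    rw [div_le_iff₀' hC]
    exact main lam hlam.1 hlam.2
  have hM : 1 ≤ (MOf Φ Ψ m) ^ (1 / p) :=
    Real.one_le_rpow (le_max_left _ _) (by positivity)
  refine hfin.trans (mul_le_mul_of_nonneg_right ?_ hdn)
  exact le_mul_of_one_le_right (by positivity) hM
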